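/- arXiv:2211.00820 — 2 statements merged into one kernel-verified Lean document; each statement's English description precedes it below -/
import Mathlib

section
/- Let μ be a Borel probability measure on Ω absolutely continuous with respect to d-dimensional Lebesgue measure, and let ν be a Borel probability measure on Ω with spt(ν) ⊂ M, where M is a C¹ submanifold of ℝ^d of dimension m ≤ d − 2. Then the optimal transport map for W1(μ,ν) is unique up to modification on sets of μ-measure zero: if T0 and T1 are both optimal transport maps for W1(μ,ν), then T0(x) = T1(x) for μ-almost every x ∈ Ω. -/
open MeasureTheory Set

noncomputable section

/-- The Wasserstein 1 distance between two Borel probability measures, defined as the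
infimum of the transport cost over all couplings. -/
def W1 {d : ℕ} (μ ν : Measure (EuclideanSpace ℝ (Fin d))) : ℝ :=
  sInf {c | ∃ γ : Measure (EuclideanSpace ℝ (Fin d) × EuclideanSpace ℝ (Fin d)),
    IsProbabilityMeasure γ ∧ γ.map Prod.fst = μ ∧ γ.map Prod.snd = ν ∧
    c = ∫ p, ‖p.1 - p.2‖ ∂γ}

/-- `T` is an optimal transport map for `W1(μ, ν)`: a Borel map from Ω to Ω pushing μ
forward to ν whose transport cost equals `W1 μ ν`. -/
def IsOptimalMap {d : ℕ} (Ω : Set (EuclideanSpace ℝ (Fin d)))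
    (μ ν : Measure (EuclideanSpace ℝ (Fin d)))
    (T : EuclideanSpace ℝ (Fin d) → EuclideanSpace ℝ (Fin d)) : Prop :=
  Measurable T ∧ MapsTo T Ω Ω ∧ μ.map T = ν ∧ ∫ x, ‖x - T x‖ ∂μ = W1 μ ν

/-- The support of a Borel measure: the set of points all of whose open neighbourhoods
have positive measure (equivalently, the smallest closed set of full measure). -/
def mSupport {X : Type*} [TopologicalSpace X] [MeasurableSpace X] (μ : Measure X) : Set X :=
  {x | ∀ U : Set X, IsOpen U → x ∈ U → 0 < μ U}

/-- `M` is a C¹ submanifold of `ℝ^d` of dimension `m`: it is covered by countably many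
charts `(U i, φ i)` where `φ i` is a C¹ map, injective on `U i`, with inverse Lipschitz
on the image `φ i '' U i`. -/
def IsC1Submanifold {d : ℕ} (m : ℕ) (M : Set (EuclideanSpace ℝ (Fin d))) : Prop :=
  ∃ (U : ℕ → Set (EuclideanSpace ℝ (Fin d)))
    (φ : ℕ → EuclideanSpace ℝ (Fin d) → EuclideanSpace ℝ (Fin m)),
    M ⊆ ⋃ i, U i ∧
    ∀ i, U i ⊆ M ∧ ContDiffOn ℝ 1 (φ i) (U i) ∧ InjOn (φ i) (U i) ∧
      ∃ (K : NNReal) (ψ : EuclideanSpace ℝ (Fin m) → EuclideanSpace ℝ (Fin d)),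
        LipschitzOnWith K ψ (φ i '' U i) ∧ ∀ x ∈ U i, ψ (φ i x) = x

/-!
The average of the plans carried by the graphs of two optimal maps `T₀`, `T₁` is again optimal, so
its support is cyclically monotone and carries a Rockafellar potential: a 1-Lipschitz function `u`
that drops at unit rate from `x` to `T₀ x` and from `x` to `T₁ x`, for almost every `x`. By
Rademacher's theorem `u` is differentiable almost everywhere, and where it is, all its rays issued
from `x` point in the same direction, so `T₀ x ≠ T₁ x` forces the nearer of the two images, a point
of `M`, to lie in the interior of a ray through `x`. By the parallelogram law the ray direction is a
Lipschitz function of the point, as long as the point stays at least a fixed distance away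
from both ends of its ray; hence the union of the rays with an interior point in `M` is a countable
union of Lipschitz images of subsets of `ℝ^m × ℝ`, which is Lebesgue null since `m + 1 < d`.
-/

open scoped NNReal ENNReal

/-! ### Transport rays -/

/-- `x` and `y` lie on a common transport ray of the potential `u`, with `x` upstream: along the way
from `x` to `y` the potential drops at the largest rate allowed for a 1-Lipschitz function. -/
def IsRayPair {X : Type*} [PseudoMetricSpace X] (u : X → ℝ) (x y : X) : Prop :=
  u x - u y = dist x y

/-- The points lying strictly upstream, on a transport ray of `u`, of a point of `M` that is not the
lower end of that ray. -/
def upstreamOfInterior {X : Type*} [PseudoMetricSpace X] (u : X → ℝ) (M : Set X) : Set X :=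
  {x | ∃ y ∈ M, ∃ z, x ≠ y ∧ y ≠ z ∧ IsRayPair u x y ∧ IsRayPair u y z}

section Metric

variable {X : Type*} [PseudoMetricSpace X] {u : X → ℝ} {x y z : X}

lemma sub_le_dist_of_lipschitzWith_one (hu : LipschitzWith 1 u) (x y : X) :
    u x - u y ≤ dist x y :=
  (le_abs_self _).trans (by simpa [Real.dist_eq] using hu.dist_le_mul x y)

lemma IsRayPair.dist_add_dist (hu : LipschitzWith 1 u) (hxy : IsRayPair u x y)
    (hyz : IsRayPair u y z) : dist x y + dist y z = dist x z := by
  refine le_antisymm ?_ (dist_triangle x y z)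
  rw [← hxy, ← hyz, sub_add_sub_cancel]
  exact sub_le_dist_of_lipschitzWith_one hu x z

lemma IsRayPair.trans (hu : LipschitzWith 1 u) (hxy : IsRayPair u x y) (hyz : IsRayPair u y z) :
    IsRayPair u x z := by
  rw [IsRayPair, ← hxy.dist_add_dist hu hyz, ← hxy, ← hyz, sub_add_sub_cancel]

lemma IsRayPair.of_dist_add_dist (hu : LipschitzWith 1 u) (hxz : IsRayPair u x z)
    (hy : dist x y + dist y z = dist x z) : IsRayPair u x y ∧ IsRayPair u y z := by
  have hxy := sub_le_dist_of_lipschitzWith_one hu x y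
  have hyz := sub_le_dist_of_lipschitzWith_one hu y z
  unfold IsRayPair at *
  constructor <;> linarith

end Metric

section NormedSpace

variable {E : Type*} [NormedAddCommGroup E] [NormedSpace ℝ E] {u : E → ℝ} {x y z : E}

lemma IsRayPair.add_smul_left (hu : LipschitzWith 1 u) (hxy : IsRayPair u x y) {s : ℝ}
    (hs : s ∈ Icc (0 : ℝ) 1) : IsRayPair u (y + s • (x - y)) y := by
  have hw : Wbtw ℝ y (y + s • (x - y)) x := ⟨s, hs, by simp [AffineMap.lineMap_apply, add_comm]⟩
  exact (hxy.of_dist_add_dist hu hw.symm.dist_add_dist).2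

lemma IsRayPair.sub_smul_right (hu : LipschitzWith 1 u) (hxy : IsRayPair u x y) {s : ℝ}
    (hs : s ∈ Icc (0 : ℝ) 1) : IsRayPair u x (x - s • (x - y)) := by
  have hw : Wbtw ℝ x (x - s • (x - y)) y :=
    ⟨s, hs, by rw [AffineMap.lineMap_apply_module']; module⟩
  exact (hxy.of_dist_add_dist hu hw.dist_add_dist).1

lemma IsRayPair.fderiv_sub_eq_dist (hu : LipschitzWith 1 u) (hd : DifferentiableAt ℝ u x)
    (hxy : IsRayPair u x y) : fderiv ℝ u x (x - y) = dist x y := by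
  have hline : HasDerivAt (fun t : ℝ ↦ u (x + t • (y - x))) (fderiv ℝ u x (y - x)) 0 :=
    hd.hasFDerivAt.hasLineDerivAt (y - x)
  have haffine : ∀ t ∈ Icc (0 : ℝ) 1, u (x + t • (y - x)) = u x - t * dist x y := by
    intro t ht
    have hray : u x - _ = dist x _ := hxy.sub_smul_right hu ht
    rw [dist_self_sub_right, norm_smul, Real.norm_of_nonneg ht.1, ← dist_eq_norm] at hray
    rw [← hray, ← neg_sub x y, smul_neg, ← sub_eq_add_neg, sub_sub_cancel]
  have hslope : HasDerivAt (fun t : ℝ ↦ u x - t * dist x y) (-dist x y) 0 := by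
    simpa using ((hasDerivAt_id (0 : ℝ)).mul_const (dist x y)).const_sub (u x)
  have hzero : (0 : ℝ) ∈ Icc (0 : ℝ) 1 := by simp
  have heq : fderiv ℝ u x (y - x) = -dist x y :=
    (uniqueDiffOn_Icc_zero_one 0 hzero).eq_deriv _ hline.hasDerivWithinAt
      (hslope.hasDerivWithinAt.congr haffine (haffine 0 hzero))
  rw [← neg_sub, map_neg, heq, neg_neg]

variable [StrictConvexSpace ℝ E]

lemma IsRayPair.sameRay_of_differentiableAt (hu : LipschitzWith 1 u)
    (hd : DifferentiableAt ℝ u x) (hxy : IsRayPair u x y) (hxz : IsRayPair u x z) :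
    SameRay ℝ (x - y) (x - z) := by
  rw [sameRay_iff_norm_add]
  refine le_antisymm (norm_add_le _ _) ?_
  calc ‖x - y‖ + ‖x - z‖ = fderiv ℝ u x ((x - y) + (x - z)) := by
        rw [map_add, hxy.fderiv_sub_eq_dist hu hd, hxz.fderiv_sub_eq_dist hu hd, dist_eq_norm,
          dist_eq_norm]
    _ ≤ ‖fderiv ℝ u x ((x - y) + (x - z))‖ := le_abs_self _
    _ ≤ 1 * ‖(x - y) + (x - z)‖ :=
        (fderiv ℝ u x).le_of_opNorm_le (by simpa using norm_fderiv_le_of_lipschitz ℝ hu) _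
    _ = ‖(x - y) + (x - z)‖ := one_mul _

lemma IsRayPair.total_of_differentiableAt (hu : LipschitzWith 1 u) (hd : DifferentiableAt ℝ u x)
    (hxy : IsRayPair u x y) (hxz : IsRayPair u x z) : IsRayPair u y z ∨ IsRayPair u z y := by
  have hyz := (hxy.sameRay_of_differentiableAt hu hd hxz).norm_sub
  rw [sub_sub_sub_cancel_left, ← dist_eq_norm, ← dist_eq_norm, ← dist_eq_norm, ← hxy, ← hxz,
    sub_sub_sub_cancel_left] at hyz
  rcases abs_choice (u z - u y) with habs | habs <;> rw [habs] at hyz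
  · exact .inr hyz.symm
  · exact .inl (by rw [IsRayPair, dist_comm, hyz, neg_sub])

lemma IsRayPair.eq_of_notMem_upstreamOfInterior (hu : LipschitzWith 1 u)
    (hd : DifferentiableAt ℝ u x) {M : Set E} (hx : x ∉ M) (hxM : x ∉ upstreamOfInterior u M)
    (hy : y ∈ M) (hz : z ∈ M) (hxy : IsRayPair u x y) (hxz : IsRayPair u x z) : y = z := by
  by_contra hyz
  apply hxM
  rcases hxy.total_of_differentiableAt hu hd hxz with h | h
  · exact ⟨y, hy, z, (ne_of_mem_of_not_mem hy hx).symm, hyz, hxy, h⟩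
  · exact ⟨z, hz, y, (ne_of_mem_of_not_mem hz hx).symm, Ne.symm hyz, hxz, h⟩

lemma IsRayPair.exists_centered_ray (hu : LipschitzWith 1 u) (hxy : IsRayPair u x y)
    (hyz : IsRayPair u y z) {r : ℝ} (hr : 0 < r) (hrx : r ≤ dist x y) (hrz : r ≤ dist y z) :
    ∃ w, ‖w‖ = r ∧ IsRayPair u (y + w) (y - w) ∧ ∃ t : ℝ, 0 ≤ t ∧ x = y + t • w := by
  have hx : 0 < dist x y := hr.trans_le hrx
  have hz : 0 < dist y z := hr.trans_le hrz
  have hdir : (dist x y)⁻¹ • (x - y) = (dist y z)⁻¹ • (y - z) := by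
    simp only [dist_eq_norm]
    refine (sameRay_iff_inv_norm_smul_eq_of_ne (sub_ne_zero.2 (dist_pos.1 hx))
      (sub_ne_zero.2 (dist_pos.1 hz))).1 (sameRay_iff_norm_add.2 ?_)
    rw [sub_add_sub_cancel]
    simpa only [dist_eq_norm] using (hxy.dist_add_dist hu hyz).symm
  have hwx : r • (dist x y)⁻¹ • (x - y) = (r / dist x y) • (x - y) := smul_smul _ _ _
  have hwz : r • (dist x y)⁻¹ • (x - y) = (r / dist y z) • (y - z) := by
    rw [hdir, smul_smul, div_eq_mul_inv]
  refine ⟨r • (dist x y)⁻¹ • (x - y), ?_, IsRayPair.trans (y := y) hu ?_ ?_, dist x y / r,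
    by positivity, ?_⟩
  · rw [hwx, norm_smul, Real.norm_of_nonneg (by positivity), ← dist_eq_norm,
      div_mul_cancel₀ _ hx.ne']
  · rw [hwx]
    exact hxy.add_smul_left hu ⟨by positivity, div_le_one_of_le₀ hrx hx.le⟩
  · rw [hwz]
    exact hyz.sub_smul_right hu ⟨by positivity, div_le_one_of_le₀ hrz hz.le⟩
  · rw [hwx, smul_smul, div_mul_div_cancel₀ hr.ne', div_self hx.ne', one_smul, add_sub_cancel]

end NormedSpace

section InnerProductSpace

variable {E : Type*} [NormedAddCommGroup E] [InnerProductSpace ℝ E] {u : E → ℝ}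

/-- Crossing the two rays and applying the parallelogram law to `w + w'` and `y - y'` turns the
total drop `4 * ‖w‖` of `u` into the bound. -/
lemma norm_sub_le_of_isRayPair_centered (hu : LipschitzWith 1 u) {y y' w w' : E}
    (hnorm : ‖w‖ = ‖w'‖) (hw : IsRayPair u (y + w) (y - w))
    (hw' : IsRayPair u (y' + w') (y' - w')) :
    ‖w - w'‖ ≤ ‖y - y'‖ := by
  have drop (v a : E) : dist (v + a) (v - a) = 2 * ‖a‖ := by
    rw [dist_eq_norm, add_sub_sub_cancel, ← two_smul ℝ, norm_smul, Real.norm_ofNat]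
  rw [IsRayPair, drop] at hw hw'
  have hcross := sub_le_dist_of_lipschitzWith_one hu (y + w) (y' - w')
  have hcross' := sub_le_dist_of_lipschitzWith_one hu (y' + w') (y - w)
  rw [dist_eq_norm, show y + w - (y' - w') = (w + w') + (y - y') by abel] at hcross
  rw [dist_eq_norm, show y' + w' - (y - w) = (w + w') - (y - y') by abel] at hcross'
  have hpar := parallelogram_law_with_norm ℝ (w + w') (y - y')
  have hpar' := parallelogram_law_with_norm ℝ w w'
  have hsum : 4 * ‖w‖ ≤ ‖(w + w') + (y - y')‖ + ‖(w + w') - (y - y')‖ := by linarith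
  refine (sq_le_sq₀ (norm_nonneg _) (norm_nonneg _)).1 ?_
  nlinarith [sq_nonneg (‖(w + w') + (y - y')‖ - ‖(w + w') - (y - y')‖), norm_nonneg w, hsum]

lemma exists_lipschitzOnWith_ray_direction (hu : LipschitzWith 1 u) (r : ℝ) :
    ∃ dir : E → E,
      LipschitzOnWith 1 dir {y | ∃ w, ‖w‖ = r ∧ IsRayPair u (y + w) (y - w)} ∧
      ∀ y w, ‖w‖ = r → IsRayPair u (y + w) (y - w) → dir y = w := by
  classical
  let dir : E → E := fun y ↦
    if h : ∃ w, ‖w‖ = r ∧ IsRayPair u (y + w) (y - w) then h.choose else 0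
  have hdir : ∀ y w, ‖w‖ = r → IsRayPair u (y + w) (y - w) → dir y = w := by
    intro y w hr hw
    have hex : ∃ w, ‖w‖ = r ∧ IsRayPair u (y + w) (y - w) := ⟨w, hr, hw⟩
    obtain ⟨hr', hw'⟩ := hex.choose_spec
    have hle := norm_sub_le_of_isRayPair_centered hu (hr'.trans hr.symm) hw' hw
    rw [sub_self, norm_zero] at hle
    simpa only [dir, dif_pos hex] using sub_eq_zero.1 (norm_le_zero_iff.1 hle)
  refine ⟨dir, LipschitzOnWith.of_dist_le_mul ?_, hdir⟩
  rintro y ⟨w, hr, hw⟩ y' ⟨w', hr', hw'⟩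
  rw [hdir y w hr hw, hdir y' w' hr' hw', NNReal.coe_one, one_mul, dist_eq_norm, dist_eq_norm]
  exact norm_sub_le_of_isRayPair_centered hu (hr.trans hr'.symm) hw hw'

end InnerProductSpace

/-! ### The rays through a rectifiable set -/

lemma addHaar_image_eq_zero_of_lipschitzOnWith {E F : Type*} [NormedAddCommGroup E]
    [NormedSpace ℝ E] [FiniteDimensional ℝ E] [MeasurableSpace E] [BorelSpace E]
    [NormedAddCommGroup F] [NormedSpace ℝ F] [FiniteDimensional ℝ F]
    (lam : Measure E) [lam.IsAddHaarMeasure] {K : ℝ≥0} {f : F → E} {s : Set F}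
    (hf : LipschitzOnWith K f s) (hdim : Module.finrank ℝ F < Module.finrank ℝ E) :
    lam (f '' s) = 0 := by
  have hac : lam ≪ Measure.hausdorffMeasure ((Module.finrank ℝ E : ℝ≥0) : ℝ) := by
    simpa using Measure.absolutelyContinuous_isAddHaarMeasure lam _
  refine measure_zero_of_dimH_lt hac ?_
  calc dimH (f '' s) ≤ dimH s := hf.dimH_image_le
    _ ≤ dimH (univ : Set F) := dimH_mono (subset_univ s)
    _ = Module.finrank ℝ F := Real.dimH_univ_eq_finrank F
    _ < (Module.finrank ℝ E : ℝ≥0) := by exact_mod_cast hdim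

lemma lipschitzOnWith_add_smul {X E : Type*} [PseudoMetricSpace X] [NormedAddCommGroup E]
    [NormedSpace ℝ E] {f g : X → E} {s : Set X} {Kf Kg C R : ℝ≥0} (hf : LipschitzOnWith Kf f s)
    (hg : LipschitzOnWith Kg g s) (hC : ∀ x ∈ s, ‖g x‖ ≤ C) :
    LipschitzOnWith (Kf + (C + R * Kg)) (fun p : X × ℝ ↦ f p.1 + p.2 • g p.1)
      (s ×ˢ Icc 0 (R : ℝ)) := by
  refine LipschitzOnWith.of_dist_le_mul ?_
  rintro ⟨x, t⟩ ⟨hx, -⟩ ⟨x', t'⟩ ⟨hx', ht'⟩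
  have hspace : dist x x' ≤ dist (x, t) (x', t') := le_max_left _ _
  have htime : dist t t' ≤ dist (x, t) (x', t') := le_max_right _ _
  calc dist (f x + t • g x) (f x' + t' • g x')
      ≤ dist (f x) (f x') + dist (t • g x) (t' • g x') := dist_add_add_le _ _ _ _
    _ ≤ dist (f x) (f x') + (dist (t • g x) (t' • g x) + dist (t' • g x) (t' • g x')) := by
        gcongr
        exact dist_triangle _ _ _
    _ = dist (f x) (f x') + (‖g x‖ * dist t t' + t' * dist (g x) (g x')) := by
        rw [dist_smul₀, Real.norm_of_nonneg ht'.1, dist_eq_norm (t • g x), ← sub_smul, norm_smul,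
          ← dist_eq_norm t, mul_comm]
    _ ≤ Kf * dist (x, t) (x', t') +
          (C * dist (x, t) (x', t') + R * (Kg * dist (x, t) (x', t'))) := by
        gcongr
        · exact (hf.dist_le_mul x hx x' hx').trans (by gcongr)
        · exact hC x hx
        · exact ht'.2
        · exact (hg.dist_le_mul x hx x' hx').trans (by gcongr)
    _ = _ := by push_cast; ring

/-- `M` is covered by countably many Lipschitz images of subsets of `ℝ^m`. The pieces need not be
measurable, and no exceptional null set is allowed. -/
def IsCountablyRectifiable {X : Type*} [PseudoMetricSpace X] (m : ℕ) (M : Set X) : Prop :=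
  ∃ (f : ℕ → EuclideanSpace ℝ (Fin m) → X) (s : ℕ → Set (EuclideanSpace ℝ (Fin m))),
    (∀ i, ∃ K, LipschitzOnWith K (f i) (s i)) ∧ M ⊆ ⋃ i, f i '' s i

lemma IsCountablyRectifiable.addHaar_eq_zero {E : Type*} [NormedAddCommGroup E] [NormedSpace ℝ E]
    [FiniteDimensional ℝ E] [MeasurableSpace E] [BorelSpace E] (lam : Measure E)
    [lam.IsAddHaarMeasure] {m : ℕ} {M : Set E} (hM : IsCountablyRectifiable m M)
    (hm : m < Module.finrank ℝ E) : lam M = 0 := by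
  obtain ⟨f, s, hf, hcover⟩ := hM
  refine measure_mono_null hcover (measure_iUnion_null fun i ↦ ?_)
  obtain ⟨K, hK⟩ := hf i
  exact addHaar_image_eq_zero_of_lipschitzOnWith lam hK (by simpa using hm)

/-- The initial pieces, of length `r * R`, of the transport rays of `u` issued upstream from those
points of `M` around which the ray extends by at least `r` on both sides. -/
def rayTube {E : Type*} [NormedAddCommGroup E] [NormedSpace ℝ E] (u : E → ℝ) (M : Set E)
    (r R : ℝ) : Set E :=
  {x | ∃ y ∈ M, ∃ w, ‖w‖ = r ∧ IsRayPair u (y + w) (y - w) ∧ ∃ t ∈ Icc 0 R, x = y + t • w}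

lemma upstreamOfInterior_subset_iUnion_rayTube {E : Type*} [NormedAddCommGroup E] [NormedSpace ℝ E]
    [StrictConvexSpace ℝ E] {u : E → ℝ} (hu : LipschitzWith 1 u) (M : Set E) :
    upstreamOfInterior u M ⊆ ⋃ (k : ℕ) (N : ℕ), rayTube u M (1 / (k + 1)) N := by
  rintro x ⟨y, hyM, z, hxy_ne, hyz_ne, hxy, hyz⟩
  obtain ⟨k, hk⟩ := exists_nat_one_div_lt (lt_min (dist_pos.2 hxy_ne) (dist_pos.2 hyz_ne))
  obtain ⟨w, hw, hray, t, ht, rfl⟩ := hxy.exists_centered_ray hu hyz Nat.one_div_pos_of_nat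
    (hk.le.trans (min_le_left _ _)) (hk.le.trans (min_le_right _ _))
  obtain ⟨N, hN⟩ := exists_nat_ge t
  exact mem_iUnion₂.2 ⟨k, N, y, hyM, w, hw, hray, t, ⟨ht, hN⟩, rfl⟩

section Rectifiable

variable {E : Type*} [NormedAddCommGroup E] [InnerProductSpace ℝ E] [FiniteDimensional ℝ E]
  [MeasurableSpace E] [BorelSpace E] (lam : Measure E) [lam.IsAddHaarMeasure] {m : ℕ} {M : Set E}
  {u : E → ℝ}

lemma IsCountablyRectifiable.addHaar_rayTube_eq_zero (hM : IsCountablyRectifiable m M)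
    (hm : m + 2 ≤ Module.finrank ℝ E) (hu : LipschitzWith 1 u) (r R : ℝ≥0) :
    lam (rayTube u M r R) = 0 := by
  obtain ⟨f, s, hf, hcover⟩ := hM
  obtain ⟨dir, hdir_lip, hdir⟩ := exists_lipschitzOnWith_ray_direction hu (r : ℝ)
  set G : Set E := {y | ∃ w, ‖w‖ = (r : ℝ) ∧ IsRayPair u (y + w) (y - w)}
  have htube : rayTube u M r R ⊆ ⋃ i,
      (fun p : EuclideanSpace ℝ (Fin m) × ℝ ↦ f i p.1 + p.2 • dir (f i p.1)) ''
        ((s i ∩ f i ⁻¹' G) ×ˢ Icc 0 (R : ℝ)) := by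
    rintro x ⟨y, hyM, w, hw, hray, t, ht, rfl⟩
    obtain ⟨i, v, hv, rfl⟩ := mem_iUnion.1 (hcover hyM)
    refine mem_iUnion.2 ⟨i, (v, t), ⟨⟨hv, w, hw, hray⟩, ht⟩, ?_⟩
    simp only [hdir _ w hw hray]
  refine measure_mono_null htube (measure_iUnion_null fun i ↦ ?_)
  obtain ⟨K, hK⟩ := hf i
  have hf_lip : LipschitzOnWith K (f i) (s i ∩ f i ⁻¹' G) := hK.mono inter_subset_left
  have hbound : ∀ v ∈ s i ∩ f i ⁻¹' G, ‖dir (f i v)‖ ≤ r := by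
    rintro v ⟨-, w, hw, hray⟩
    rw [hdir _ w hw hray, hw]
  refine addHaar_image_eq_zero_of_lipschitzOnWith lam
    (lipschitzOnWith_add_smul hf_lip (hdir_lip.comp hf_lip fun _ hv ↦ hv.2) hbound) ?_
  rw [Module.finrank_prod, finrank_euclideanSpace_fin, Module.finrank_self]
  omega

lemma IsCountablyRectifiable.addHaar_upstreamOfInterior_eq_zero (hM : IsCountablyRectifiable m M)
    (hm : m + 2 ≤ Module.finrank ℝ E) (hu : LipschitzWith 1 u) :
    lam (upstreamOfInterior u M) = 0 := by
  refine measure_mono_null (upstreamOfInterior_subset_iUnion_rayTube hu M)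
    (measure_iUnion_null fun k ↦ measure_iUnion_null fun N ↦ ?_)
  simpa using hM.addHaar_rayTube_eq_zero lam hm hu (1 / (k + 1)) N

end Rectifiable

/-! ### Optimal plans -/

section OptimalPlan

/-- `γ` has finite cost `∫ c ∂γ`, minimal among the measures of finite cost with the same marginals.
The total mass of `γ` is not normalized, so that parts of optimal plans are again optimal plans. -/
structure IsOptimalPlan {X Y : Type*} [MeasurableSpace X] [MeasurableSpace Y] (c : X × Y → ℝ)
    (γ : Measure (X × Y)) : Prop where
  integrable : Integrable c γ
  integral_le : ∀ γ' : Measure (X × Y), γ'.fst = γ.fst → γ'.snd = γ.snd → Integrable c γ' →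
    ∫ p, c p ∂γ ≤ ∫ p, c p ∂γ'

variable {X Y : Type*} [MeasurableSpace X] [MeasurableSpace Y] {c : X × Y → ℝ}
  {γ γ₀ γ₁ : Measure (X × Y)}

lemma IsOptimalPlan.convexCombo (h₀ : IsOptimalPlan c γ₀) (h₁ : IsOptimalPlan c γ₁)
    (hfst : γ₀.fst = γ₁.fst) (hsnd : γ₀.snd = γ₁.snd) {a b : ℝ≥0} (hab : a + b = 1) :
    IsOptimalPlan c (a • γ₀ + b • γ₁) := by
  have hint₀ := h₀.integrable.smul_measure_nnreal (c := a)
  have hint₁ := h₁.integrable.smul_measure_nnreal (c := b)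
  refine ⟨hint₀.add_measure hint₁, fun γ' hfst' hsnd' hint' ↦ ?_⟩
  have hfst₀ : γ'.fst = γ₀.fst := by
    rw [hfst', Measure.fst_add, Measure.fst, Measure.fst, Measure.map_smul, Measure.map_smul,
      ← Measure.fst, ← Measure.fst, ← hfst, ← add_smul, hab, one_smul]
  have hsnd₀ : γ'.snd = γ₀.snd := by
    rw [hsnd', Measure.snd_add, Measure.snd, Measure.snd, Measure.map_smul, Measure.map_smul,
      ← Measure.snd, ← Measure.snd, ← hsnd, ← add_smul, hab, one_smul]
  calc ∫ p, c p ∂(a • γ₀ + b • γ₁) = a • ∫ p, c p ∂γ₀ + b • ∫ p, c p ∂γ₁ := by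
        rw [integral_add_measure hint₀ hint₁, integral_smul_nnreal_measure,
          integral_smul_nnreal_measure]
    _ ≤ a • ∫ p, c p ∂γ' + b • ∫ p, c p ∂γ' := by
        gcongr a • ?_ + b • ?_
        · exact h₀.integral_le γ' hfst₀ hsnd₀ hint'
        · exact h₁.integral_le γ' (hfst₀.trans hfst) (hsnd₀.trans hsnd) hint'
    _ = ∫ p, c p ∂γ' := by rw [← add_smul, hab, one_smul]

lemma IsOptimalPlan.mono {ρ : Measure (X × Y)} [IsFiniteMeasure ρ] (h : IsOptimalPlan c γ)
    (hρ : ρ ≤ γ) : IsOptimalPlan c ρ := by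
  have hint_ρ : Integrable c ρ := h.integrable.mono_measure hρ
  have hint_rest : Integrable c (γ - ρ) := h.integrable.mono_measure Measure.sub_le
  refine ⟨hint_ρ, fun τ hfst hsnd hint ↦ ?_⟩
  have hle := h.integral_le (γ - ρ + τ)
    (by rw [Measure.fst_add, hfst, ← Measure.fst_add, Measure.sub_add_cancel_of_le hρ])
    (by rw [Measure.snd_add, hsnd, ← Measure.snd_add, Measure.sub_add_cancel_of_le hρ])
    (hint_rest.add_measure hint)
  have hsplit : ∫ p, c p ∂γ = ∫ p, c p ∂(γ - ρ) + ∫ p, c p ∂ρ := by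
    rw [← integral_add_measure hint_rest hint_ρ, Measure.sub_add_cancel_of_le hρ]
  rw [hsplit, integral_add_measure hint_rest hint] at hle
  exact le_of_add_le_add_left hle

lemma IsOptimalPlan.sum_integral_le_sum_integral_perm (h : IsOptimalPlan c γ) (hc : Measurable c)
    {ι Q : Type*} [Fintype ι] [MeasurableSpace Q] {Γ : Measure Q} [IsFiniteMeasure Γ]
    {x : ι → Q → X} {y : ι → Q → Y} (hx : ∀ i, Measurable (x i)) (hy : ∀ i, Measurable (y i))
    (hle : ∑ i, Γ.map (fun q ↦ (x i q, y i q)) ≤ γ) (σ : Equiv.Perm ι)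
    (hint : ∀ i, Integrable (fun q ↦ c (x i q, y (σ i) q)) Γ) :
    ∑ i, ∫ q, c (x i q, y i q) ∂Γ ≤ ∑ i, ∫ q, c (x i q, y (σ i) q) ∂Γ := by
  have hmeas (i j : ι) : Measurable fun q ↦ (x i q, y j q) := (hx i).prodMk (hy j)
  have hopt := h.mono hle
  have hfst : (∑ i, Γ.map fun q ↦ (x i q, y (σ i) q)).fst
      = (∑ i, Γ.map fun q ↦ (x i q, y i q)).fst := by
    simp only [Measure.fst, Measure.map_finset_sum measurable_fst.aemeasurable,
      Measure.map_map measurable_fst (hmeas _ _)]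
    rfl
  have hsnd : (∑ i, Γ.map fun q ↦ (x i q, y (σ i) q)).snd
      = (∑ i, Γ.map fun q ↦ (x i q, y i q)).snd := by
    simp only [Measure.snd, Measure.map_finset_sum measurable_snd.aemeasurable,
      Measure.map_map measurable_snd (hmeas _ _)]
    exact Equiv.sum_comp σ fun i ↦ Γ.map (y i)
  have hint_perm : ∀ i ∈ Finset.univ, Integrable c (Γ.map fun q ↦ (x i q, y (σ i) q)) := fun i _ ↦
    (integrable_map_measure hc.aestronglyMeasurable (hmeas _ _).aemeasurable).2 (hint i)
  have hle_cost := hopt.integral_le _ hfst hsnd (integrable_finsetSum_measure.2 hint_perm)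
  rw [integral_finsetSum_measure (integrable_finsetSum_measure.1 hopt.integrable),
    integral_finsetSum_measure hint_perm] at hle_cost
  simpa only [integral_map (hmeas _ _).aemeasurable hc.aestronglyMeasurable] using hle_cost

end OptimalPlan

lemma exists_measure_pi_near_of_mem_support {ι Z : Type*} [Fintype ι] [TopologicalSpace Z]
    [MeasurableSpace Z] [OpensMeasurableSpace Z] {γ : Measure Z} [IsFiniteMeasure γ] {p : ι → Z}
    (hp : ∀ i, p i ∈ γ.support) {O : Set (ι → Z)} (hO : IsOpen O) (hpO : p ∈ O) :
    ∃ Γ : Measure (ι → Z), IsFiniteMeasure Γ ∧ Γ ≠ 0 ∧ (∀ᵐ q ∂Γ, q ∈ O) ∧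
      ∑ i, Γ.map (fun q ↦ q i) ≤ γ := by
  classical
  obtain ⟨W, hW, hWO⟩ := isOpen_pi_iff'.1 hO p hpO
  let Γ : Measure (ι → Z) := Measure.pi fun i ↦ γ.restrict (W i)
  have hΓ_ne : Γ ≠ 0 := by
    rw [← Measure.measure_univ_ne_zero, Measure.pi_univ, Finset.prod_ne_zero_iff]
    intro i _
    rw [Measure.restrict_apply_univ]
    exact ((Measure.mem_support_iff_forall _).1 (hp i) _ ((hW i).1.mem_nhds (hW i).2)).ne'
  have hΓ_mem : ∀ᵐ q ∂Γ, q ∈ O := by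
    have hbox : ∀ᵐ q ∂(Measure.pi fun _ : ι ↦ γ).restrict (univ.pi W), q ∈ univ.pi W :=
      ae_restrict_mem (.univ_pi fun i ↦ (hW i).1.measurableSet)
    rw [Measure.restrict_pi_pi] at hbox
    filter_upwards [hbox] with q hq using hWO hq
  let C : ℝ≥0∞ := ∑ i, ∏ j ∈ Finset.univ.erase i, γ (W j)
  have hC : C ≠ ∞ :=
    ENNReal.sum_ne_top.2 fun i _ ↦ ENNReal.prod_ne_top fun j _ ↦ measure_ne_top γ (W j)
  have hΓ_le : ∑ i, Γ.map (fun q ↦ q i) ≤ C • γ := by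
    rw [Finset.sum_smul]
    refine Finset.sum_le_sum fun i _ ↦ ?_
    calc Γ.map (Function.eval i) = (∏ j ∈ Finset.univ.erase i, γ (W j)) • γ.restrict (W i) := by
          simp only [Γ, Measure.pi_map_eval, Measure.restrict_apply_univ]
      _ ≤ _ := by gcongr; exact Measure.restrict_le_self
  refine ⟨(C + 1)⁻¹ • Γ, Γ.smul_finite (by simp), by simpa using ⟨hC, hΓ_ne⟩,
    Measure.ae_smul_measure hΓ_mem _, ?_⟩
  simp only [Measure.map_smul, ← Finset.smul_sum]
  calc (C + 1)⁻¹ • ∑ i, Γ.map (fun q ↦ q i) ≤ (C + 1)⁻¹ • (C + 1) • γ := by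
        gcongr
        exact hΓ_le.trans (by gcongr; exact le_self_add)
    _ = γ := by rw [smul_smul, ENNReal.inv_mul_cancel (by simp) (by finiteness), one_smul]

lemma integral_lt_integral_of_ae_lt {Q : Type*} [MeasurableSpace Q] {Γ : Measure Q} (hΓ : Γ ≠ 0)
    {f g : Q → ℝ} (hf : Integrable f Γ) (hg : Integrable g Γ) (hfg : ∀ᵐ q ∂Γ, f q < g q) :
    ∫ q, f q ∂Γ < ∫ q, g q ∂Γ := by
  have hle : f ≤ᵐ[Γ] g := hfg.mono fun q hq ↦ hq.le
  refine (integral_mono_ae hf hg hle).lt_of_ne fun heq ↦ hΓ (ae_eq_bot.1 ?_)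
  rw [← Filter.eventually_false_iff_eq_bot]
  filter_upwards [hfg, (integral_eq_iff_of_ae_le hf hg hle).1 heq] with q hlt heq
  exact hlt.ne heq

/-- Permuting the second entries of finitely many pairs in `S` does not lower their total cost. -/
def IsCyclicallyMonotone {X Y : Type*} (c : X × Y → ℝ) (S : Set (X × Y)) : Prop :=
  ∀ (n : ℕ) (p : Fin n → X × Y) (σ : Equiv.Perm (Fin n)), (∀ i, p i ∈ S) →
    ∑ i, c (p i) ≤ ∑ i, c ((p i).1, (p (σ i)).2)

/-- If a permutation lowered the cost at some points of the support, it would also do so nearby, and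
permuting a small part of the mass of `γ` near these points would lower the cost of `γ`. -/
theorem IsOptimalPlan.isCyclicallyMonotone_support {X Y : Type*} [TopologicalSpace X]
    [MeasurableSpace X] [OpensMeasurableSpace X] [TopologicalSpace Y] [MeasurableSpace Y]
    [OpensMeasurableSpace Y] [SecondCountableTopologyEither X Y] {c : X × Y → ℝ}
    {γ : Measure (X × Y)} [IsFiniteMeasure γ] (h : IsOptimalPlan c γ) (hc : Continuous c) :
    IsCyclicallyMonotone c γ.support := by
  intro n p σ hp
  by_contra! hlt
  let O : Set (Fin n → X × Y) :=
    {q | ∑ i, c ((q i).1, (q (σ i)).2) < ∑ i, c (q i)} ∩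
      ⋂ (i) (j), {q | |c ((q i).1, (q j).2)| < |c ((p i).1, (p j).2)| + 1}
  have hO : IsOpen O := by
    refine (isOpen_lt (by fun_prop) (by fun_prop)).inter ?_
    exact isOpen_iInter_of_finite fun i ↦ isOpen_iInter_of_finite fun j ↦
      isOpen_lt (by fun_prop) (by fun_prop)
  have hpO : p ∈ O := ⟨hlt, mem_iInter₂.2 fun i j ↦ lt_add_one |c ((p i).1, (p j).2)|⟩
  obtain ⟨Γ, hΓ_fin, hΓ_ne, hΓO, hΓ_le⟩ := exists_measure_pi_near_of_mem_support hp hO hpO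
  have hint (i j : Fin n) : Integrable (fun q ↦ c ((q i).1, (q j).2)) Γ := by
    refine .of_bound (Measurable.aestronglyMeasurable ?_) (|c ((p i).1, (p j).2)| + 1) ?_
    · exact hc.measurable.comp (by fun_prop)
    · filter_upwards [hΓO] with q hq using (mem_iInter₂.1 hq.2 i j).le
  have hle := h.sum_integral_le_sum_integral_perm hc.measurable (Γ := Γ) (x := fun i q ↦ (q i).1)
    (y := fun i q ↦ (q i).2) (by fun_prop) (by fun_prop) hΓ_le σ fun i ↦ hint i (σ i)
  rw [← integral_finsetSum _ fun i _ ↦ hint i i,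
    ← integral_finsetSum _ fun i _ ↦ hint i (σ i)] at hle
  exact hle.not_gt <| integral_lt_integral_of_ae_lt hΓ_ne
    (integrable_finsetSum _ fun i _ ↦ hint i (σ i)) (integrable_finsetSum _ fun i _ ↦ hint i i)
    (hΓO.mono fun q hq ↦ hq.1)

/-! ### The Rockafellar potential of a cyclically monotone set -/

section Potential

variable {X : Type*} [PseudoMetricSpace X]

/-- The balance of the chain of pairs `p 0, …, p n` followed by the point `z`: the length of the
jumps from the second entry of each pair to the first entry of the next one (and finally to `z`),
minus the lengths of the pairs. Its infimum over chains is Rockafellar's potential. -/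
def chainCost {n : ℕ} (p : Fin (n + 1) → X × X) (z : X) : ℝ :=
  ∑ i : Fin n, dist (p i.succ).1 (p i.castSucc).2 + dist z (p (Fin.last n)).2 -
    ∑ i, dist (p i).1 (p i).2

lemma chainCost_le_add_dist {n : ℕ} (p : Fin (n + 1) → X × X) (z z' : X) :
    chainCost p z ≤ chainCost p z' + dist z z' := by
  have := dist_triangle z z' (p (Fin.last n)).2
  unfold chainCost
  linarith

lemma chainCost_snoc {n : ℕ} (p : Fin (n + 1) → X × X) (q : X × X) :
    chainCost (Fin.snoc p q : Fin (n + 2) → X × X) q.2 = chainCost p q.1 - dist q.1 q.2 := by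
  rw [chainCost, chainCost, Fin.sum_univ_castSucc, Fin.sum_univ_castSucc (n := n + 1)]
  simp only [Fin.succ_castSucc, Fin.snoc_castSucc, Fin.succ_last, Fin.snoc_last, dist_self]
  ring

lemma IsCyclicallyMonotone.chainCost_nonneg {S : Set (X × X)}
    (hS : IsCyclicallyMonotone (fun p ↦ dist p.1 p.2) S) {n : ℕ} {p : Fin (n + 1) → X × X}
    (hp : ∀ i, p i ∈ S) : 0 ≤ chainCost p (p 0).1 := by
  have hle := hS (n + 1) p (finRotate (n + 1)).symm hp
  have hrotate : ∑ i, dist (p i).1 (p ((finRotate (n + 1)).symm i)).2 =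
      ∑ i : Fin n, dist (p i.succ).1 (p i.castSucc).2 + dist (p 0).1 (p (Fin.last n)).2 := by
    rw [← Equiv.sum_comp (finRotate (n + 1)), Fin.sum_univ_castSucc]
    simp only [Equiv.symm_apply_apply]
    simp only [finRotate_apply, Fin.coeSucc_eq_succ, Fin.last_add_one]
  rwa [chainCost, sub_nonneg, ← hrotate]

/-- Rockafellar's construction: appending `(x, y) ∈ S` to a chain ending at `x` gives a chain ending
at `y` whose cost is smaller by `dist x y`. -/
theorem IsCyclicallyMonotone.exists_isRayPair {S : Set (X × X)}
    (hS : IsCyclicallyMonotone (fun p ↦ dist p.1 p.2) S) :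
    ∃ u : X → ℝ, LipschitzWith 1 u ∧ ∀ p ∈ S, IsRayPair u p.1 p.2 := by
  rcases S.eq_empty_or_nonempty with rfl | ⟨a, ha⟩
  · exact ⟨fun _ ↦ 0, .const' 0, fun _ h ↦ h.elim⟩
  let Chain := {q : Σ n : ℕ, Fin (n + 1) → X × X // q.2 0 = a ∧ ∀ i, q.2 i ∈ S}
  have : Nonempty Chain := ⟨⟨0, fun _ ↦ a⟩, rfl, fun _ ↦ ha⟩
  let u : X → ℝ := fun z ↦ ⨅ q : Chain, chainCost q.1.2 z
  have hbdd (z : X) : BddBelow (range fun q : Chain ↦ chainCost q.1.2 z) := by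
    refine ⟨-dist a.1 z, ?_⟩
    rintro _ ⟨⟨⟨n, p⟩, hp0, hp⟩, rfl⟩
    have hnonneg : 0 ≤ chainCost p (p 0).1 := hS.chainCost_nonneg hp
    have hmove := chainCost_le_add_dist p (p 0).1 z
    rw [show p 0 = a from hp0] at hnonneg hmove
    exact neg_le_iff_add_nonneg.2 (hnonneg.trans hmove)
  have hu : LipschitzWith 1 u := by
    refine .of_le_add fun z z' ↦ sub_le_iff_le_add.1 (le_ciInf fun q ↦ ?_)
    exact sub_le_iff_le_add.2 ((ciInf_le (hbdd z) q).trans (chainCost_le_add_dist _ z z'))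
  refine ⟨u, hu, fun p hp ↦ le_antisymm (sub_le_dist_of_lipschitzWith_one hu _ _) ?_⟩
  suffices u p.2 + dist p.1 p.2 ≤ u p.1 by linarith
  refine le_ciInf fun ⟨⟨n, q⟩, hq0, hq⟩ ↦ ?_
  have hmem : ∀ i, (Fin.snoc q p : Fin (n + 2) → X × X) i ∈ S :=
    Fin.lastCases (by simpa using hp) (by simpa using hq)
  have hstart : (Fin.snoc q p : Fin (n + 2) → X × X) 0 = a :=
    (Fin.snoc_castSucc (α := fun _ ↦ X × X) p q 0).trans hq0
  have hle : u p.2 ≤ chainCost (Fin.snoc q p : Fin (n + 2) → X × X) p.2 :=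
    ciInf_le (hbdd p.2) ⟨⟨n + 1, Fin.snoc q p⟩, hstart, hmem⟩
  rw [chainCost_snoc] at hle
  exact le_sub_iff_add_le.1 hle

end Potential

/-! ### Uniqueness of optimal maps -/

theorem exists_common_potential_of_isOptimalPlan {X : Type*} [PseudoMetricSpace X]
    [SecondCountableTopology X] [MeasurableSpace X] [OpensMeasurableSpace X]
    {γ₀ γ₁ : Measure (X × X)} [IsFiniteMeasure γ₀] [IsFiniteMeasure γ₁]
    (h₀ : IsOptimalPlan (fun p : X × X ↦ dist p.1 p.2) γ₀)
    (h₁ : IsOptimalPlan (fun p : X × X ↦ dist p.1 p.2) γ₁)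
    (hfst : γ₀.fst = γ₁.fst) (hsnd : γ₀.snd = γ₁.snd) :
    ∃ u : X → ℝ, LipschitzWith 1 u ∧ (∀ᵐ p ∂γ₀, IsRayPair u p.1 p.2) ∧
      ∀ᵐ p ∂γ₁, IsRayPair u p.1 p.2 := by
  have havg := h₀.convexCombo h₁ hfst hsnd (add_halves (1 : ℝ≥0))
  obtain ⟨u, hu, hray⟩ := (havg.isCyclicallyMonotone_support continuous_dist).exists_isRayPair
  have hae : ∀ᵐ p ∂((1 / 2 : ℝ≥0) • γ₀ + (1 / 2 : ℝ≥0) • γ₁), IsRayPair u p.1 p.2 :=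
    Filter.mem_of_superset Measure.support_mem_ae hray
  rw [ae_add_measure_iff] at hae
  exact ⟨u, hu, (Measure.ae_smul_measure_iff (by simp)).1 hae.1,
    (Measure.ae_smul_measure_iff (by simp)).1 hae.2⟩

theorem stmt11_general {E : Type*} [NormedAddCommGroup E] [InnerProductSpace ℝ E]
    [FiniteDimensional ℝ E] [MeasurableSpace E] [BorelSpace E] {lam μ ν : Measure E}
    [lam.IsAddHaarMeasure] [IsFiniteMeasure μ] (hac : μ ≪ lam) {m : ℕ}
    (hm : m + 2 ≤ Module.finrank ℝ E) {M : Set E} (hM : IsCountablyRectifiable m M)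
    (hνM : ∀ᵐ y ∂ν, y ∈ M) {T₀ T₁ : E → E} (hT₀ : Measurable T₀) (hT₁ : Measurable T₁)
    (hν₀ : μ.map T₀ = ν) (hν₁ : μ.map T₁ = ν)
    (h₀ : IsOptimalPlan (fun p : E × E ↦ dist p.1 p.2) (μ.map fun x ↦ (x, T₀ x)))
    (h₁ : IsOptimalPlan (fun p : E × E ↦ dist p.1 p.2) (μ.map fun x ↦ (x, T₁ x))) :
    ∀ᵐ x ∂μ, T₀ x = T₁ x := by
  have hgraph₀ : AEMeasurable (fun x ↦ (x, T₀ x)) μ := (measurable_id.prodMk hT₀).aemeasurable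
  have hgraph₁ : AEMeasurable (fun x ↦ (x, T₁ x)) μ := (measurable_id.prodMk hT₁).aemeasurable
  obtain ⟨u, hu, hray₀, hray₁⟩ := exists_common_potential_of_isOptimalPlan h₀ h₁
    (by rw [Measure.fst_map_prodMk hT₀, Measure.fst_map_prodMk hT₁])
    (by rw [Measure.snd_map_prodMk measurable_id', Measure.snd_map_prodMk measurable_id', hν₀, hν₁])
  have hM_null : ∀ᵐ x ∂lam, x ∉ M :=
    measure_eq_zero_iff_ae_notMem.1 (hM.addHaar_eq_zero lam (by omega))
  have hup_null : ∀ᵐ x ∂lam, x ∉ upstreamOfInterior u M :=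
    measure_eq_zero_iff_ae_notMem.1 (hM.addHaar_upstreamOfInterior_eq_zero lam hm hu)
  filter_upwards [hac.ae_le hu.ae_differentiableAt, hac.ae_le hM_null, hac.ae_le hup_null,
    ae_of_ae_map hT₀.aemeasurable (hν₀.symm ▸ hνM), ae_of_ae_map hT₁.aemeasurable (hν₁.symm ▸ hνM),
    ae_of_ae_map hgraph₀ hray₀, ae_of_ae_map hgraph₁ hray₁] with x hd hxM hxup hy₀ hy₁ hx₀ hx₁
  exact hx₀.eq_of_notMem_upstreamOfInterior hu hd hxM hxup hy₀ hy₁ hx₁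

lemma mSupport_mem_ae {X : Type*} [TopologicalSpace X] [HereditarilyLindelofSpace X]
    [MeasurableSpace X] (ν : Measure X) : mSupport ν ∈ ae ν := by
  have hsupp : mSupport ν = ν.support := by
    rw [Measure.support_eq_forall_isOpen]
    exact ext fun x ↦ forall_congr' fun U ↦ forall_comm
  exact hsupp ▸ Measure.support_mem_ae

section Euclidean

variable {d : ℕ} {μ ν : Measure (EuclideanSpace ℝ (Fin d))}

lemma IsC1Submanifold.isCountablyRectifiable {m : ℕ} {M : Set (EuclideanSpace ℝ (Fin d))}
    (hM : IsC1Submanifold m M) : IsCountablyRectifiable m M := by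
  obtain ⟨U, φ, hcover, hchart⟩ := hM
  choose _ _ _ K ψ hψ hinv using hchart
  refine ⟨ψ, fun i ↦ φ i '' U i, fun i ↦ ⟨K i, hψ i⟩, hcover.trans (iUnion_mono fun i x hx ↦ ?_)⟩
  exact ⟨φ i x, mem_image_of_mem _ hx, hinv i x hx⟩

lemma W1_le_integral_dist (γ : Measure (EuclideanSpace ℝ (Fin d) × EuclideanSpace ℝ (Fin d)))
    [IsProbabilityMeasure γ] : W1 γ.fst γ.snd ≤ ∫ p, dist p.1 p.2 ∂γ := by
  simp only [dist_eq_norm]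
  refine csInf_le ⟨0, ?_⟩ ⟨γ, inferInstance, rfl, rfl, rfl⟩
  rintro _ ⟨γ', -, -, -, rfl⟩
  exact integral_nonneg fun p ↦ norm_nonneg _

lemma IsOptimalMap.isOptimalPlan [IsProbabilityMeasure μ] {Ω : Set (EuclideanSpace ℝ (Fin d))}
    (hΩ : Bornology.IsBounded Ω) (hμΩ : μ Ωᶜ = 0)
    {T : EuclideanSpace ℝ (Fin d) → EuclideanSpace ℝ (Fin d)} (hT : IsOptimalMap Ω μ ν T) :
    IsOptimalPlan (fun p ↦ dist p.1 p.2) (μ.map fun x ↦ (x, T x)) := by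
  obtain ⟨hmeas, hmaps, hpush, hcost⟩ := hT
  have hgraph : AEMeasurable (fun x ↦ (x, T x)) μ := (measurable_id.prodMk hmeas).aemeasurable
  have hdist : AEStronglyMeasurable
      (fun p : EuclideanSpace ℝ (Fin d) × EuclideanSpace ℝ (Fin d) ↦ dist p.1 p.2)
      (μ.map fun x ↦ (x, T x)) := continuous_dist.aestronglyMeasurable
  refine ⟨?_, fun γ hfst hsnd _ ↦ ?_⟩
  · rw [integrable_map_measure hdist hgraph]
    refine .of_bound (hdist.comp_aemeasurable hgraph) (Metric.diam Ω) ?_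
    filter_upwards [compl_mem_ae_iff.2 hμΩ] with x hx
    rw [compl_compl] at hx
    simpa using Metric.dist_le_diam_of_mem hΩ hx (hmaps hx)
  · rw [Measure.fst_map_prodMk hmeas, Measure.map_id'] at hfst
    rw [Measure.snd_map_prodMk measurable_id', hpush] at hsnd
    have : IsProbabilityMeasure γ := ⟨by rw [← Measure.fst_univ, hfst, measure_univ]⟩
    calc ∫ p, dist p.1 p.2 ∂(μ.map fun x ↦ (x, T x)) = W1 μ ν := by
          rw [integral_map hgraph hdist, ← hcost]
          simp only [dist_eq_norm]
      _ ≤ ∫ p, dist p.1 p.2 ∂γ := by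
          rw [← hfst, ← hsnd]
          exact W1_le_integral_dist γ

end Euclidean

theorem stmt11 {d : ℕ} (hd : 1 ≤ d) (Ω : Set (EuclideanSpace ℝ (Fin d)))
    (hΩc : IsCompact Ω) (hΩv : Convex ℝ Ω)
    (μ ν : Measure (EuclideanSpace ℝ (Fin d)))
    [IsProbabilityMeasure μ] [IsProbabilityMeasure ν]
    (hμΩ : μ Ωᶜ = 0) (hνΩ : ν Ωᶜ = 0) (hac : μ ≪ volume)
    (m : ℕ) (hm : m + 2 ≤ d) (M : Set (EuclideanSpace ℝ (Fin d)))
    (hM : IsC1Submanifold m M) (hspt : mSupport ν ⊆ M)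
    (T0 T1 : EuclideanSpace ℝ (Fin d) → EuclideanSpace ℝ (Fin d))
    (hT0 : IsOptimalMap Ω μ ν T0) (hT1 : IsOptimalMap Ω μ ν T1) :
    ∀ᵐ x ∂μ, T0 x = T1 x := by
  exact stmt11_general hac (by simpa using hm) hM.isCountablyRectifiable
    (Filter.mem_of_superset (mSupport_mem_ae ν) hspt) hT0.1 hT1.1 hT0.2.2.1 hT1.2.2.1
    (hT0.isOptimalPlan hΩc.isBounded hμΩ) (hT1.isOptimalPlan hΩc.isBounded hμΩ)
end
end

section
/- Let μ be a Borel probability measure on Ω absolutely continuous with respect to d-dimensional Lebesgue measure, let ν be a Borel probability measure on Ω, let u0 be a Kantorovich potential and T0 an optimal transport map for W1(μ,ν), let η ≥ 0, and let μ̃ = (I − η∇u0)_#μ be the pushforward of μ under any Borel map equal Lebesgue-almost everywhere to x ↦ x − η∇u0(x). Then W1(μ̃, ν) ≤ W1(μ,ν) − η·(2·μ({x ∈ Ω : |x − T0(x)| ≥ η}) − 1). -/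
open MeasureTheory Set

noncomputable section

/-- `u0` is a Kantorovich potential for `W1(μ, ν)`: it is 1-Lipschitz on Ω and achieves
the supremum in the dual problem. -/
def IsKantorovichPotential {d : ℕ} (Ω : Set (EuclideanSpace ℝ (Fin d)))
    (μ ν : Measure (EuclideanSpace ℝ (Fin d))) (u0 : EuclideanSpace ℝ (Fin d) → ℝ) : Prop :=
  LipschitzOnWith 1 u0 Ω ∧
  ∀ u : EuclideanSpace ℝ (Fin d) → ℝ, LipschitzOnWith 1 u Ω →
    ∫ x, u x ∂μ - ∫ x, u x ∂ν ≤ ∫ x, u0 x ∂μ - ∫ x, u0 x ∂ν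

/-! Extend `u0` to a 1-Lipschitz function `v` on the whole space. By Kantorovich–Rubinstein duality
the cost of `T0` equals `∫ v dμ - ∫ v dν`, so `v x - v (T0 x) = |x - T0 x|` for `μ`-almost every
`x`, and `v` decreases with slope one along the segment from `x` to `T0 x`. Hence `∇v x` is the
unit vector pointing from `T0 x` to `x` (when these differ), and `x - η ∇v x` lies at distance at
most `| |x - T0 x| - η |` from `T0 x`. Integrating `|r - η| ≤ r + η - 2 η 1_{η ≤ r}` with
`r = |x - T0 x|` bounds the cost of the coupling `(x - η ∇u0 x, T0 x)`.

Duality comes from Hahn–Banach applied to the value of the dual problem, which is sublinear in the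
cost: a linear minorant touching it at the given cost is represented, by Riesz–Markov–Kakutani, by
an optimal coupling. -/

open Filter Metric Topology
open scoped NNReal Pointwise CompactlySupported

section NormedSpace

variable {E : Type*} [NormedAddCommGroup E] [NormedSpace ℝ E]

lemma tangentConeAt_eq_univ_of_density_one [FiniteDimensional ℝ E]
    [MeasurableSpace E] [BorelSpace E] (μ : Measure E) [μ.IsAddHaarMeasure] {s : Set E} {x : E}
    (hx : Tendsto (fun r => μ (s ∩ closedBall x r) / μ (closedBall x r)) (𝓝[>] 0) (𝓝 1)) :
    tangentConeAt ℝ s x = univ := by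
  refine eq_univ_of_forall fun z => ?_
  rw [tangentConeAt_eq_biInter_closure]
  refine mem_iInter₂.2 fun U hU => Metric.mem_closure_iff.2 fun ε hε => ?_
  have hmeets : ∀ᶠ r in 𝓝[>] (0 : ℝ), (s ∩ ({x} + r • ball z ε)).Nonempty :=
    Measure.eventually_nonempty_inter_smul_of_density_one μ s x hx _ measurableSet_ball
      (measure_ball_pos μ z hε).ne'
  have hsmall : ∀ᶠ r in 𝓝[>] (0 : ℝ), {(0 : E)} + r • ball z ε ⊆ U :=
    nhdsWithin_le_nhds (eventually_singleton_add_smul_subset isBounded_ball hU)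
  obtain ⟨r, ⟨y, hys, hy⟩, hrU, hr⟩ := (hmeets.and (hsmall.and self_mem_nhdsWithin)).exists
  obtain ⟨_, rfl, _, ⟨a, ha, rfl⟩, rfl⟩ := hy
  have har : r • a ∈ U := hrU ⟨0, rfl, r • a, ⟨a, ha, rfl⟩, zero_add _⟩
  refine ⟨a, ?_, mem_ball'.1 ha⟩
  exact ⟨r⁻¹, mem_univ _, r • a, ⟨har, hys⟩, inv_smul_smul₀ (ne_of_gt hr) a⟩

lemma ae_restrict_uniqueDiffWithinAt [FiniteDimensional ℝ E]
    [MeasurableSpace E] [BorelSpace E] (μ : Measure E) [μ.IsAddHaarMeasure] (s : Set E) :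
    ∀ᵐ x ∂μ.restrict s, UniqueDiffWithinAt ℝ s x := by
  filter_upwards [Besicovitch.ae_tendsto_measure_inter_div μ s] with x hx
  have hcone := tangentConeAt_eq_univ_of_density_one μ hx
  refine ⟨?_, mem_closure_of_nonempty_tangentConeAt (𝕜 := ℝ) (hcone ▸ univ_nonempty)⟩
  simp only [hcone, Submodule.span_univ, Submodule.top_coe, dense_univ]

lemma lineMap_eq_sub_mul_norm_of_lipschitzWith_one {v : E → ℝ} {x y : E}
    (hv : LipschitzWith 1 v) (hxy : v x - v y = ‖x - y‖) {t : ℝ} (ht : t ∈ Icc (0 : ℝ) 1) :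
    v (AffineMap.lineMap x y t) = v x - t * ‖x - y‖ := by
  have hle (a b : E) : v a ≤ v b + dist a b := by
    simpa only [NNReal.coe_one, one_mul] using hv.le_add_mul a b
  have hfrom_x := hle x (AffineMap.lineMap x y t)
  have hto_y := hle (AffineMap.lineMap x y t) y
  rw [dist_left_lineMap, Real.norm_of_nonneg ht.1, dist_eq_norm] at hfrom_x
  rw [dist_lineMap_right, Real.norm_of_nonneg (sub_nonneg.2 ht.2), dist_eq_norm] at hto_y
  linarith

end NormedSpace

section InnerProductSpace

variable {E : Type*} [NormedAddCommGroup E] [InnerProductSpace ℝ E]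

lemma hasGradientAt_of_hasGradientWithinAt [CompleteSpace E] {v : E → ℝ} {g x : E} {s : Set E}
    (hs : UniqueDiffWithinAt ℝ s x) (hv : DifferentiableAt ℝ v x)
    (hg : HasGradientWithinAt v g s x) : HasGradientAt v g x := by
  have hderiv : fderiv ℝ v x = InnerProductSpace.toDual ℝ E g :=
    hs.eq hv.hasFDerivAt.hasFDerivWithinAt hg.hasFDerivWithinAt
  rw [hasGradientAt_iff_hasFDerivAt, ← hderiv]
  exact hv.hasFDerivAt

-- The extension `v` is differentiable a.e. by Rademacher, and the gradient of `u` within `s`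
-- pins down that of `v` at the density points of `s`.
lemma ae_restrict_forall_hasGradientAt_of_eqOn [FiniteDimensional ℝ E] [MeasurableSpace E]
    [BorelSpace E] (μ : Measure E) [μ.IsAddHaarMeasure] {s : Set E} (hs : MeasurableSet s)
    {u v : E → ℝ} {K : ℝ≥0} (hv : LipschitzWith K v) (huv : EqOn u v s) :
    ∀ᵐ x ∂μ.restrict s, ∀ g, HasGradientWithinAt u g s x → HasGradientAt v g x := by
  filter_upwards [ae_restrict_uniqueDiffWithinAt μ s, ae_restrict_mem hs,
    ae_restrict_of_ae hv.ae_differentiableAt] with x hsx hxs hvx g hg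
  have hvg : HasGradientWithinAt v g s x :=
    hg.hasFDerivWithinAt.congr huv.symm (huv hxs).symm
  exact hasGradientAt_of_hasGradientWithinAt hsx hvx hvg

variable [CompleteSpace E] {v : E → ℝ} {g x y : E}

lemma norm_le_of_hasGradientAt_of_lipschitzWith {K : ℝ≥0} (hv : LipschitzWith K v)
    (hg : HasGradientAt v g x) : ‖g‖ ≤ K := by
  simpa only [LinearIsometryEquiv.norm_map] using hg.hasFDerivAt.le_of_lipschitz hv

lemma inner_gradient_sub_eq_norm (hv : LipschitzWith 1 v) (hg : HasGradientAt v g x)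
    (hxy : v x - v y = ‖x - y‖) : inner ℝ g (x - y) = ‖x - y‖ := by
  have hzero : (0 : ℝ) ∈ Icc (0 : ℝ) 1 := left_mem_Icc.2 zero_le_one
  have hchain : HasDerivAt (v ∘ AffineMap.lineMap x y) (inner ℝ g (y - x)) (0 : ℝ) := by
    have hg' : HasFDerivAt v (InnerProductSpace.toDual ℝ E g) (AffineMap.lineMap x y (0 : ℝ)) := by
      simpa only [AffineMap.lineMap_apply_zero] using hg.hasFDerivAt
    exact hg'.comp_hasDerivAt 0 AffineMap.hasDerivAt_lineMap
  have haffine : HasDerivWithinAt (v ∘ AffineMap.lineMap x y) (-‖x - y‖) (Icc (0 : ℝ) 1) 0 := by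
    have hlin : HasDerivAt (fun t : ℝ => v x - t * ‖x - y‖) (-‖x - y‖) 0 := by
      simpa only [id, one_mul] using ((hasDerivAt_id (0 : ℝ)).mul_const ‖x - y‖).const_sub (v x)
    exact hlin.hasDerivWithinAt.congr
      (fun t ht => lineMap_eq_sub_mul_norm_of_lipschitzWith_one hv hxy ht)
      (lineMap_eq_sub_mul_norm_of_lipschitzWith_one hv hxy hzero)
  have heq : inner ℝ g (y - x) = -‖x - y‖ :=
    (uniqueDiffOn_Icc_zero_one 0 hzero).eq_deriv _ hchain.hasDerivWithinAt haffine
  rw [← neg_sub y x, inner_neg_right, heq, neg_neg, neg_sub]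

lemma norm_smul_gradient_eq_sub (hv : LipschitzWith 1 v) (hg : HasGradientAt v g x)
    (hxy : v x - v y = ‖x - y‖) : ‖x - y‖ • g = x - y := by
  have hinner := inner_gradient_sub_eq_norm hv hg hxy
  have hnorm : ‖g‖ ≤ 1 := by
    simpa using norm_le_of_hasGradientAt_of_lipschitzWith hv hg
  have hsq : ‖‖x - y‖ • g - (x - y)‖ ^ 2 ≤ 0 := calc
    ‖‖x - y‖ • g - (x - y)‖ ^ 2 = ‖x - y‖ ^ 2 * (‖g‖ ^ 2 - 1) := by
      rw [norm_sub_sq_real, real_inner_smul_left, hinner, norm_smul, norm_norm]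
      ring
    _ ≤ 0 := mul_nonpos_of_nonneg_of_nonpos (sq_nonneg _)
      (sub_nonpos.2 (pow_le_one₀ (norm_nonneg g) hnorm))
  rw [← sub_eq_zero, ← norm_eq_zero]
  exact sq_eq_zero_iff.1 (le_antisymm hsq (sq_nonneg _))

lemma norm_sub_smul_gradient_sub_le (hv : LipschitzWith 1 v) (hg : HasGradientAt v g x)
    (hxy : v x - v y = ‖x - y‖) (η : ℝ) : ‖x - η • g - y‖ ≤ |‖x - y‖ - η| := by
  have hray : x - η • g - y = (‖x - y‖ - η) • g := by
    rw [sub_smul, norm_smul_gradient_eq_sub hv hg hxy, sub_right_comm]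
  calc ‖x - η • g - y‖ = |‖x - y‖ - η| * ‖g‖ := by rw [hray, norm_smul, Real.norm_eq_abs]
    _ ≤ |‖x - y‖ - η| := mul_le_of_le_one_right (abs_nonneg _)
      (by simpa using norm_le_of_hasGradientAt_of_lipschitzWith hv hg)

end InnerProductSpace

lemma exists_linearMap_eq_and_le_of_sublinear {E : Type*} [AddCommGroup E] [Module ℝ E]
    (N : E → ℝ) (N_hom : ∀ c : ℝ, 0 < c → ∀ x, N (c • x) = c * N x)
    (N_add : ∀ x y, N (x + y) ≤ N x + N y) (x₀ : E) :
    ∃ Λ : E →ₗ[ℝ] ℝ, Λ x₀ = N x₀ ∧ ∀ x, Λ x ≤ N x := by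
  have N_zero : N 0 = 0 := by
    have h := N_hom 2 two_pos 0
    rw [smul_zero] at h
    linarith
  have hwell : ∀ c : ℝ, c • x₀ = 0 → c • N x₀ = 0 := fun c hc =>
    (smul_eq_zero.1 hc).elim (fun h => by rw [h, zero_smul])
      fun h => by rw [h, N_zero, smul_zero]
  have hline : ∀ t : ℝ, t * N x₀ ≤ N (t • x₀) := by
    intro t
    rcases lt_trichotomy t 0 with ht | rfl | ht
    · have h := N_add (t • x₀) ((-t) • x₀)
      rw [← add_smul, add_neg_cancel, zero_smul, N_zero, N_hom (-t) (neg_pos.2 ht)] at h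
      linarith
    · rw [zero_mul, zero_smul, N_zero]
    · exact (N_hom t ht x₀).ge
  obtain ⟨Λ, hext, hle⟩ := exists_extension_of_le_sublinear
    (LinearPMap.mkSpanSingleton' (σ := RingHom.id ℝ) x₀ (N x₀) hwell) N N_hom N_add (by
      rintro ⟨x, hx⟩
      obtain ⟨t, rfl⟩ := Submodule.mem_span_singleton.1 hx
      exact (LinearPMap.mkSpanSingleton'_apply x₀ (N x₀) hwell t hx).trans_le (hline t))
  refine ⟨Λ, ?_, hle⟩
  have hx₀ := Submodule.mem_span_singleton_self (R := ℝ) x₀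
  exact (hext ⟨x₀, hx₀⟩).trans (LinearPMap.mkSpanSingleton'_apply_self x₀ (N x₀) hwell hx₀)

lemma integrable_continuousMap {X : Type*} [TopologicalSpace X] [CompactSpace X]
    [MeasurableSpace X] [OpensMeasurableSpace X] (μ : Measure X) [IsFiniteMeasureOnCompacts μ]
    (f : C(X, ℝ)) : Integrable f μ :=
  f.continuous.integrable_of_hasCompactSupport (HasCompactSupport.of_compactSpace f)

lemma exists_isFiniteMeasure_forall_integral_eq {X : Type*} [TopologicalSpace X] [CompactSpace X]
    [T2Space X] [MeasurableSpace X] [BorelSpace X] (Λ : C(X, ℝ) →ₗ[ℝ] ℝ)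
    (hΛ : ∀ f, 0 ≤ f → 0 ≤ Λ f) :
    ∃ γ : Measure X, IsFiniteMeasure γ ∧ ∀ f : C(X, ℝ), ∫ x, f x ∂γ = Λ f := by
  let toC : C_c(X, ℝ) →ₗ[ℝ] C(X, ℝ) :=
    { toFun := fun f => f.toContinuousMap
      map_add' := fun _ _ => rfl
      map_smul' := fun _ _ => rfl }
  let Λc : C_c(X, ℝ) →ₚ[ℝ] ℝ := PositiveLinearMap.mk₀ (Λ ∘ₗ toC) fun f hf => hΛ (toC f) hf
  refine ⟨RealRMK.rieszMeasure Λc, inferInstance, fun f => ?_⟩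
  exact RealRMK.integral_rieszMeasure Λc ⟨f, HasCompactSupport.of_compactSpace f⟩

/-- `γ` is a coupling (transport plan) of `μ` and `ν`: its marginals are `μ` and `ν`. -/
structure IsCoupling {X Y : Type*} [MeasurableSpace X] [MeasurableSpace Y]
    (γ : Measure (X × Y)) (μ : Measure X) (ν : Measure Y) : Prop where
  map_fst : γ.map Prod.fst = μ
  map_snd : γ.map Prod.snd = ν

namespace IsCoupling

variable {X Y X' Y' : Type*} [MeasurableSpace X] [MeasurableSpace Y] [MeasurableSpace X']
  [MeasurableSpace Y'] {γ : Measure (X × Y)} {μ : Measure X} {ν : Measure Y}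

lemma isProbabilityMeasure [IsProbabilityMeasure μ] (h : IsCoupling γ μ ν) :
    IsProbabilityMeasure γ := by
  have : IsProbabilityMeasure (γ.map Prod.fst) := h.map_fst ▸ inferInstance
  exact Measure.isProbabilityMeasure_of_map Prod.fst

lemma prod (μ : Measure X) (ν : Measure Y) [IsProbabilityMeasure μ] [IsProbabilityMeasure ν] :
    IsCoupling (μ.prod ν) μ ν :=
  ⟨by rw [Measure.map_fst_prod, measure_univ, one_smul],
    by rw [Measure.map_snd_prod, measure_univ, one_smul]⟩

lemma map_prodMk {f : X → X'} {T : X → Y'} (hf : Measurable f) (hT : Measurable T) :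
    IsCoupling (μ.map fun x => (f x, T x)) (μ.map f) (μ.map T) :=
  ⟨Measure.map_map measurable_fst (hf.prodMk hT), Measure.map_map measurable_snd (hf.prodMk hT)⟩

lemma map_prodMap {f : X → X'} {g : Y → Y'} (h : IsCoupling γ μ ν) (hf : Measurable f)
    (hg : Measurable g) : IsCoupling (γ.map (Prod.map f g)) (μ.map f) (ν.map g) := by
  constructor
  · rw [← h.map_fst, Measure.map_map measurable_fst (hf.prodMap hg),
      Measure.map_map hf measurable_fst]
    rfl
  · rw [← h.map_snd, Measure.map_map measurable_snd (hf.prodMap hg),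
      Measure.map_map hg measurable_snd]
    rfl

lemma integral_fst_add_snd (h : IsCoupling γ μ ν) {φ : X → ℝ} {ψ : Y → ℝ}
    (hφ : Integrable φ μ) (hψ : Integrable ψ ν) :
    Integrable (fun p => φ p.1 + ψ p.2) γ ∧
      ∫ p, (φ p.1 + ψ p.2) ∂γ = ∫ x, φ x ∂μ + ∫ y, ψ y ∂ν := by
  obtain ⟨rfl, rfl⟩ := h
  have hφ' : Integrable (fun p : X × Y => φ p.1) γ := hφ.comp_measurable measurable_fst
  have hψ' : Integrable (fun p : X × Y => ψ p.2) γ := hψ.comp_measurable measurable_snd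
  refine ⟨hφ'.add hψ', ?_⟩
  rw [integral_add hφ' hψ', integral_map measurable_fst.aemeasurable hφ.aestronglyMeasurable,
    integral_map measurable_snd.aemeasurable hψ.aestronglyMeasurable]

lemma integral_le_integral_add_integral (h : IsCoupling γ μ ν) {c : X × Y → ℝ} {φ : X → ℝ}
    {ψ : Y → ℝ} (hc : Integrable c γ) (hφ : Integrable φ μ) (hψ : Integrable ψ ν)
    (hle : ∀ x y, c (x, y) ≤ φ x + ψ y) :
    ∫ p, c p ∂γ ≤ ∫ x, φ x ∂μ + ∫ y, ψ y ∂ν := by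
  obtain ⟨hint, heq⟩ := h.integral_fst_add_snd hφ hψ
  exact heq ▸ integral_mono hc hint fun p => hle p.1 p.2

end IsCoupling

section CompactDuality

variable {X Y : Type*} [TopologicalSpace X] [MeasurableSpace X] [TopologicalSpace Y]
  [MeasurableSpace Y]

/-- The values `∫ φ dμ + ∫ ψ dν` over continuous `φ`, `ψ` with `h (x, y) ≤ φ x + ψ y`: the
feasible values of the Kantorovich dual of maximising `∫ h dγ` over couplings `γ`. -/
def kantorovichDualValues (μ : Measure X) (ν : Measure Y) (h : C(X × Y, ℝ)) : Set ℝ :=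
  {r | ∃ (φ : C(X, ℝ)) (ψ : C(Y, ℝ)), (∀ x y, h (x, y) ≤ φ x + ψ y) ∧
    ∫ x, φ x ∂μ + ∫ y, ψ y ∂ν = r}

/-- The value of the Kantorovich dual of maximising `∫ h dγ` over couplings `γ` of `μ` and `ν`. -/
def kantorovichDual (μ : Measure X) (ν : Measure Y) (h : C(X × Y, ℝ)) : ℝ :=
  sInf (kantorovichDualValues μ ν h)

lemma smul_mem_kantorovichDualValues {μ : Measure X} {ν : Measure Y} {h : C(X × Y, ℝ)} {c r : ℝ}
    (hc : 0 ≤ c) (hr : r ∈ kantorovichDualValues μ ν h) :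
    c • r ∈ kantorovichDualValues μ ν (c • h) := by
  obtain ⟨φ, ψ, hle, rfl⟩ := hr
  refine ⟨c • φ, c • ψ, fun x y => ?_, ?_⟩
  · simpa only [ContinuousMap.smul_apply, smul_add] using smul_le_smul_of_nonneg_left (hle x y) hc
  · simp only [ContinuousMap.smul_apply, integral_smul, smul_add]

lemma kantorovichDual_smul (μ : Measure X) (ν : Measure Y) {c : ℝ} (hc : 0 < c)
    (h : C(X × Y, ℝ)) : kantorovichDual μ ν (c • h) = c * kantorovichDual μ ν h := by
  have hvalues : kantorovichDualValues μ ν (c • h) = c • kantorovichDualValues μ ν h := by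
    ext r
    rw [Set.mem_smul_set_iff_inv_smul_mem₀ hc.ne']
    refine ⟨fun hr => ?_, fun hr => ?_⟩
    · simpa only [inv_smul_smul₀ hc.ne'] using
        smul_mem_kantorovichDualValues (inv_nonneg.2 hc.le) hr
    · simpa only [smul_inv_smul₀ hc.ne'] using smul_mem_kantorovichDualValues hc.le hr
  rw [kantorovichDual, hvalues, Real.sInf_smul_of_nonneg hc.le, smul_eq_mul, kantorovichDual]

variable [CompactSpace X] [CompactSpace Y]

lemma kantorovichDualValues_nonempty (μ : Measure X) (ν : Measure Y) (h : C(X × Y, ℝ)) :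
    (kantorovichDualValues μ ν h).Nonempty := by
  obtain ⟨C, hC⟩ := (isCompact_range h.continuous).bddAbove
  refine ⟨_, ContinuousMap.const X C, 0, fun x y => ?_, rfl⟩
  simpa only [ContinuousMap.const_apply, ContinuousMap.zero_apply, add_zero] using
    hC (mem_range_self (x, y))

variable [OpensMeasurableSpace X] [OpensMeasurableSpace Y] [OpensMeasurableSpace (X × Y)]
  (μ : Measure X) (ν : Measure Y) [IsProbabilityMeasure μ] [IsProbabilityMeasure ν]

lemma bddBelow_kantorovichDualValues (h : C(X × Y, ℝ)) :
    BddBelow (kantorovichDualValues μ ν h) := by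
  refine ⟨∫ p, h p ∂μ.prod ν, ?_⟩
  rintro _ ⟨φ, ψ, hle, rfl⟩
  exact (IsCoupling.prod μ ν).integral_le_integral_add_integral (integrable_continuousMap _ h)
    (integrable_continuousMap μ φ) (integrable_continuousMap ν ψ) hle

lemma kantorovichDual_le {h : C(X × Y, ℝ)} {φ : C(X, ℝ)} {ψ : C(Y, ℝ)}
    (hle : ∀ x y, h (x, y) ≤ φ x + ψ y) :
    kantorovichDual μ ν h ≤ ∫ x, φ x ∂μ + ∫ y, ψ y ∂ν :=
  csInf_le (bddBelow_kantorovichDualValues μ ν h) ⟨φ, ψ, hle, rfl⟩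

lemma kantorovichDual_add_le (h k : C(X × Y, ℝ)) :
    kantorovichDual μ ν (h + k) ≤ kantorovichDual μ ν h + kantorovichDual μ ν k := by
  have hne := kantorovichDualValues_nonempty μ ν
  have hbdd := bddBelow_kantorovichDualValues μ ν
  rw [kantorovichDual, kantorovichDual, kantorovichDual,
    ← csInf_add (hne h) (hbdd h) (hne k) (hbdd k)]
  refine csInf_le_csInf (hbdd _) ((hne h).add (hne k)) ?_
  rintro _ ⟨_, ⟨φ, ψ, hh, rfl⟩, _, ⟨φ', ψ', hk, rfl⟩, rfl⟩
  refine ⟨φ + φ', ψ + ψ', fun x y => ?_, ?_⟩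
  · simpa only [ContinuousMap.add_apply, add_add_add_comm] using add_le_add (hh x y) (hk x y)
  · simp only [ContinuousMap.add_apply]
    rw [integral_add (integrable_continuousMap μ φ) (integrable_continuousMap μ φ'),
      integral_add (integrable_continuousMap ν ψ) (integrable_continuousMap ν ψ'),
      add_add_add_comm]

variable {μ ν} {Λ : C(X × Y, ℝ) →ₗ[ℝ] ℝ}

lemma nonneg_of_le_kantorovichDual (hΛ : ∀ h, Λ h ≤ kantorovichDual μ ν h)
    {h : C(X × Y, ℝ)} (hh : 0 ≤ h) : 0 ≤ Λ h := by
  have hle := (hΛ (-h)).trans (kantorovichDual_le μ ν (φ := 0) (ψ := 0) fun x y => by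
    simpa using hh (x, y))
  simpa using hle

lemma eq_integral_add_integral_of_le_kantorovichDual
    (hΛ : ∀ h, Λ h ≤ kantorovichDual μ ν h) {h : C(X × Y, ℝ)} {φ : C(X, ℝ)} {ψ : C(Y, ℝ)}
    (heq : ∀ x y, h (x, y) = φ x + ψ y) :
    Λ h = ∫ x, φ x ∂μ + ∫ y, ψ y ∂ν := by
  refine le_antisymm ((hΛ h).trans (kantorovichDual_le μ ν fun x y => (heq x y).le)) ?_
  have hneg := (hΛ (-h)).trans (kantorovichDual_le μ ν (φ := -φ) (ψ := -ψ) fun x y => by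
    simp [heq, add_comm])
  simp only [map_neg, ContinuousMap.neg_apply, integral_neg] at hneg
  linarith

end CompactDuality

lemma exists_isCoupling_integral_eq_kantorovichDual {X Y : Type*} [TopologicalSpace X]
    [CompactSpace X] [T2Space X] [HasOuterApproxClosed X] [MeasurableSpace X] [BorelSpace X]
    [TopologicalSpace Y] [CompactSpace Y] [T2Space Y] [HasOuterApproxClosed Y] [MeasurableSpace Y]
    [BorelSpace Y] [BorelSpace (X × Y)] (μ : Measure X) (ν : Measure Y) [IsProbabilityMeasure μ]
    [IsProbabilityMeasure ν] (h : C(X × Y, ℝ)) :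
    ∃ γ : Measure (X × Y), IsCoupling γ μ ν ∧ ∫ p, h p ∂γ = kantorovichDual μ ν h := by
  obtain ⟨Λ, hΛh, hΛ⟩ := exists_linearMap_eq_and_le_of_sublinear (kantorovichDual μ ν)
    (fun _ hc => kantorovichDual_smul μ ν hc) (kantorovichDual_add_le μ ν) h
  obtain ⟨γ, _, hγ⟩ := exists_isFiniteMeasure_forall_integral_eq Λ
    fun _ => nonneg_of_le_kantorovichDual hΛ
  refine ⟨γ, ⟨ext_of_forall_integral_eq_of_IsFiniteMeasure fun φ => ?_,
    ext_of_forall_integral_eq_of_IsFiniteMeasure fun ψ => ?_⟩, (hγ h).trans hΛh⟩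
  · calc ∫ x, φ x ∂γ.map Prod.fst = ∫ p, φ.toContinuousMap.comp ContinuousMap.fst p ∂γ :=
          integral_map measurable_fst.aemeasurable φ.continuous.aestronglyMeasurable
      _ = ∫ x, φ x ∂μ + ∫ y, (0 : C(Y, ℝ)) y ∂ν := (hγ _).trans <|
          eq_integral_add_integral_of_le_kantorovichDual hΛ (φ := φ.toContinuousMap)
            fun _ _ => (add_zero _).symm
      _ = ∫ x, φ x ∂μ := by simp
  · calc ∫ y, ψ y ∂γ.map Prod.snd = ∫ p, ψ.toContinuousMap.comp ContinuousMap.snd p ∂γ :=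
          integral_map measurable_snd.aemeasurable ψ.continuous.aestronglyMeasurable
      _ = ∫ x, (0 : C(X, ℝ)) x ∂μ + ∫ y, ψ y ∂ν := (hγ _).trans <|
          eq_integral_add_integral_of_le_kantorovichDual hΛ (ψ := ψ.toContinuousMap)
            fun _ _ => (zero_add _).symm
      _ = ∫ y, ψ y ∂ν := by simp

section KantorovichRubinstein

lemma exists_lipschitzWith_between {X : Type*} [PseudoMetricSpace X] {K : ℝ≥0} {a b : X → ℝ}
    (hab : ∀ x y, a x ≤ b y + K * dist x y) :
    ∃ u : X → ℝ, LipschitzWith K u ∧ a ≤ u ∧ u ≤ b := by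
  have hbdd (x : X) : BddBelow (range fun y => b y + K * dist x y) :=
    ⟨a x, forall_mem_range.2 (hab x)⟩
  refine ⟨fun x => ⨅ y, b y + K * dist x y, LipschitzWith.of_le_add_mul K fun x x' => ?_,
    fun x => ?_, fun x => ?_⟩
  · have : Nonempty X := ⟨x⟩
    rw [← sub_le_iff_le_add]
    refine le_ciInf fun y => sub_le_iff_le_add.2 ((ciInf_le (hbdd x) y).trans ?_)
    have htri := mul_le_mul_of_nonneg_left (dist_triangle x x' y) K.coe_nonneg
    linarith
  · have : Nonempty X := ⟨x⟩
    exact le_ciInf (hab x)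
  · simpa only [dist_self, mul_zero, add_zero] using ciInf_le (hbdd x) x

lemma exists_isCoupling_integral_dist_le {X : Type*} [MetricSpace X] [CompactSpace X]
    [MeasurableSpace X] [BorelSpace X] {μ ν : Measure X} [IsProbabilityMeasure μ]
    [IsProbabilityMeasure ν] {M : ℝ}
    (hM : ∀ u : X → ℝ, LipschitzWith 1 u → ∫ x, u x ∂μ - ∫ x, u x ∂ν ≤ M) :
    ∃ γ : Measure (X × X), IsCoupling γ μ ν ∧ ∫ p, dist p.1 p.2 ∂γ ≤ M := by
  let negDist : C(X × X, ℝ) := ⟨fun p => -dist p.1 p.2, by fun_prop⟩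
  obtain ⟨γ, hγ, hdual⟩ := exists_isCoupling_integral_eq_kantorovichDual μ ν negDist
  refine ⟨γ, hγ, neg_le_neg_iff.1 ?_⟩
  rw [← integral_neg]
  refine le_of_le_of_eq (le_csInf (kantorovichDualValues_nonempty μ ν negDist) ?_) hdual.symm
  rintro _ ⟨φ, ψ, hle, rfl⟩
  obtain ⟨u, hu, hφu, huψ⟩ := exists_lipschitzWith_between (K := 1) (a := fun x => -φ x) (b := ψ)
    fun x y => by
      have hxy : -dist x y ≤ φ x + ψ y := hle x y
      rw [NNReal.coe_one, one_mul]
      linarith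
  let U : C(X, ℝ) := ⟨u, hu.continuous⟩
  have hμ : -∫ x, φ x ∂μ ≤ ∫ x, u x ∂μ := by
    rw [← integral_neg]
    exact integral_mono (integrable_continuousMap μ φ).neg (integrable_continuousMap μ U) hφu
  have hν : ∫ x, u x ∂ν ≤ ∫ x, ψ x ∂ν :=
    integral_mono (integrable_continuousMap ν U) (integrable_continuousMap ν ψ) huψ
  linarith [hM u hu]

lemma exists_lipschitzWith_forall_subtype_eq {X : Type*} [PseudoMetricSpace X] {s : Set X}
    {K : ℝ≥0} {u : s → ℝ} (hu : LipschitzWith K u) :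
    ∃ v : X → ℝ, LipschitzWith K v ∧ ∀ x : s, v x = u x := by
  have hext : s.domRestrict (Function.extend Subtype.val u 0) = u :=
    funext (Subtype.val_injective.extend_apply u 0)
  have hlip : LipschitzOnWith K (Function.extend Subtype.val u 0) s :=
    lipschitzOnWith_iff_restrict.2 (hext.symm ▸ hu)
  obtain ⟨v, hv, huv⟩ := hlip.extend_real
  exact ⟨v, hv, fun x => (huv x.2).symm.trans (congrFun hext x)⟩

lemma exists_isCoupling_integral_dist_le_of_ae_mem_isCompact {X : Type*} [MetricSpace X]
    [MeasurableSpace X] [BorelSpace X] {Ω : Set X} (hΩ : IsCompact Ω) {μ ν : Measure X}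
    [IsProbabilityMeasure μ] [IsProbabilityMeasure ν] (hμ : ∀ᵐ x ∂μ, x ∈ Ω)
    (hν : ∀ᵐ x ∂ν, x ∈ Ω) {M : ℝ}
    (hM : ∀ u : X → ℝ, LipschitzWith 1 u → ∫ x, u x ∂μ - ∫ x, u x ∂ν ≤ M) :
    ∃ γ : Measure (X × X), IsCoupling γ μ ν ∧ ∫ p, dist p.1 p.2 ∂γ ≤ M := by
  have : CompactSpace Ω := isCompact_iff_compactSpace.1 hΩ
  have hval : MeasurableEmbedding ((↑) : Ω → X) := .subtype_coe hΩ.measurableSet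
  have hmap {ρ : Measure X} (hρ : ∀ᵐ x ∂ρ, x ∈ Ω) :
      (ρ.comap ((↑) : Ω → X)).map ((↑) : Ω → X) = ρ := by
    rw [map_comap_subtype_coe hΩ.measurableSet, Measure.restrict_eq_self_of_ae_mem hρ]
  have hprob {ρ : Measure X} [IsProbabilityMeasure ρ] (hρ : ∀ᵐ x ∂ρ, x ∈ Ω) :
      IsProbabilityMeasure (ρ.comap ((↑) : Ω → X)) :=
    hval.isProbabilityMeasure_comap (by simpa only [Subtype.range_coe] using hρ)
  have := hprob hμ
  have := hprob hν
  obtain ⟨γ, hγ, hcost⟩ := exists_isCoupling_integral_dist_le (M := M)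
      (μ := μ.comap ((↑) : Ω → X)) (ν := ν.comap ((↑) : Ω → X)) fun u hu => by
    obtain ⟨v, hv, hvu⟩ := exists_lipschitzWith_forall_subtype_eq hu
    simp only [← hvu, ← hval.integral_map, hmap hμ, hmap hν]
    exact hM v hv
  refine ⟨γ.map (Prod.map (↑) (↑)), ?_, ?_⟩
  · simpa only [hmap hμ, hmap hν] using hγ.map_prodMap hval.measurable hval.measurable
  · rw [(hval.prodMap hval).integral_map]
    exact hcost

end KantorovichRubinstein

section TransportMaps

lemma integrable_of_continuous_of_ae_mem_isCompact {X F : Type*} [TopologicalSpace X] [T2Space X]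
    [MeasurableSpace X] [OpensMeasurableSpace X] [NormedAddCommGroup F] {μ : Measure X}
    [IsFiniteMeasureOnCompacts μ] {Ω : Set X} (hΩ : IsCompact Ω) (hμ : ∀ᵐ x ∂μ, x ∈ Ω)
    {φ : X → F} (hφ : Continuous φ) : Integrable φ μ := by
  simpa only [IntegrableOn, Measure.restrict_eq_self_of_ae_mem hμ] using
    hφ.continuousOn.integrableOn_compact (μ := μ) hΩ

lemma ae_map_mem_of_mapsTo {X : Type*} [MeasurableSpace X] {μ : Measure X} {Ω : Set X}
    (hΩ : MeasurableSet Ω) (hμ : ∀ᵐ x ∂μ, x ∈ Ω) {T : X → X} (hT : Measurable T)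
    (hTΩ : MapsTo T Ω Ω) : ∀ᵐ y ∂μ.map T, y ∈ Ω :=
  (ae_map_iff hT.aemeasurable hΩ).2 (hμ.mono hTΩ)

lemma ae_sub_eq_dist_of_integral_dist_le {X : Type*} [PseudoMetricSpace X] [MeasurableSpace X]
    {μ : Measure X} {v : X → ℝ} {T : X → X} (hv : LipschitzWith 1 v) (hvμ : Integrable v μ)
    (hvT : Integrable (fun x => v (T x)) μ) (hdist : Integrable (fun x => dist x (T x)) μ)
    (hle : ∫ x, dist x (T x) ∂μ ≤ ∫ x, v x ∂μ - ∫ x, v (T x) ∂μ) :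
    ∀ᵐ x ∂μ, v x - v (T x) = dist x (T x) := by
  have hlip (x : X) : v x - v (T x) ≤ dist x (T x) := by
    simpa using sub_le_iff_le_add'.2 (hv.le_add_mul x (T x))
  rw [← integral_sub hvμ hvT] at hle
  exact (integral_eq_iff_of_ae_le (hvμ.sub hvT) hdist (ae_of_all μ hlip)).1 <|
    le_antisymm (integral_mono (hvμ.sub hvT) hdist hlip) hle

lemma integral_abs_sub_le_integral_sub {X : Type*} [MeasurableSpace X] {μ : Measure X}
    [IsProbabilityMeasure μ] {r : X → ℝ} (hr : Integrable r μ) (hr₀ : 0 ≤ r) (η : ℝ) :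
    ∫ x, |r x - η| ∂μ ≤ ∫ x, r x ∂μ - η * (2 * μ.real {x | η ≤ r x} - 1) := by
  have hfar : NullMeasurableSet {x | η ≤ r x} μ :=
    nullMeasurableSet_le aemeasurable_const hr.aemeasurable
  have hsum : Integrable (fun x => r x + η) μ := hr.add (integrable_const η)
  have hind : Integrable ({x | η ≤ r x}.indicator fun _ => 2 * η) μ :=
    (integrable_const _).indicator₀ hfar
  have hpointwise (x : X) :
      |r x - η| ≤ r x + η - {x | η ≤ r x}.indicator (fun _ => 2 * η) x := by
    rcases le_or_gt η (r x) with hx | hx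
    · rw [indicator_of_mem (show x ∈ {x | η ≤ r x} from hx), abs_of_nonneg (sub_nonneg.2 hx)]
      linarith
    · rw [indicator_of_notMem (show x ∉ {x | η ≤ r x} from hx.not_ge), abs_of_neg (sub_neg.2 hx)]
      linarith [show 0 ≤ r x from hr₀ x]
  calc ∫ x, |r x - η| ∂μ
      ≤ ∫ x, (r x + η - {x | η ≤ r x}.indicator (fun _ => 2 * η) x) ∂μ :=
        integral_mono (hr.sub (integrable_const η)).abs
          (hsum.sub hind) hpointwise
    _ = ∫ x, r x ∂μ - η * (2 * μ.real {x | η ≤ r x} - 1) := by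
        rw [integral_sub hsum hind, integral_indicator₀ hfar,
          integral_add hr (integrable_const η), setIntegral_const, integral_const,
          probReal_univ, smul_eq_mul, smul_eq_mul]
        ring

end TransportMaps

section Wasserstein

variable {d : ℕ} {Ω : Set (EuclideanSpace ℝ (Fin d))} {μ ν : Measure (EuclideanSpace ℝ (Fin d))}
  [IsProbabilityMeasure μ] {u0 v : EuclideanSpace ℝ (Fin d) → ℝ}
  {T f : EuclideanSpace ℝ (Fin d) → EuclideanSpace ℝ (Fin d)}

lemma W1_le_of_isCoupling {γ : Measure (EuclideanSpace ℝ (Fin d) × EuclideanSpace ℝ (Fin d))}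
    (hγ : IsCoupling γ μ ν) : W1 μ ν ≤ ∫ p, ‖p.1 - p.2‖ ∂γ := by
  refine csInf_le ⟨0, ?_⟩ ⟨γ, hγ.isProbabilityMeasure, hγ.map_fst, hγ.map_snd, rfl⟩
  rintro _ ⟨_, -, -, -, rfl⟩
  exact integral_nonneg fun _ => norm_nonneg _

lemma W1_map_map_le (hf : Measurable f) (hT : Measurable T) :
    W1 (μ.map f) (μ.map T) ≤ ∫ x, ‖f x - T x‖ ∂μ := by
  have := Measure.isProbabilityMeasure_map (μ := μ) hf.aemeasurable
  refine (W1_le_of_isCoupling (IsCoupling.map_prodMk hf hT)).trans_eq ?_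
  exact integral_map (hf.prodMk hT).aemeasurable (by fun_prop)

lemma IsKantorovichPotential.W1_le [IsProbabilityMeasure ν] (hu0 : IsKantorovichPotential Ω μ ν u0)
    (hΩ : IsCompact Ω) (hμ : ∀ᵐ x ∂μ, x ∈ Ω) (hν : ∀ᵐ x ∂ν, x ∈ Ω) :
    W1 μ ν ≤ ∫ x, u0 x ∂μ - ∫ x, u0 x ∂ν := by
  obtain ⟨γ, hγ, hcost⟩ := exists_isCoupling_integral_dist_le_of_ae_mem_isCompact hΩ hμ hν
    fun u hu => hu0.2 u hu.lipschitzOnWith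
  simp only [dist_eq_norm] at hcost
  exact (W1_le_of_isCoupling hγ).trans hcost

lemma IsOptimalMap.integrable_norm_sub (hT : IsOptimalMap Ω μ ν T) (hΩ : IsCompact Ω)
    (hμ : ∀ᵐ x ∂μ, x ∈ Ω) : Integrable (fun x => ‖x - T x‖) μ := by
  have hTμ : ∀ᵐ y ∂μ.map T, y ∈ Ω := ae_map_mem_of_mapsTo hΩ.measurableSet hμ hT.1 hT.2.1
  have hid : Integrable id μ := integrable_of_continuous_of_ae_mem_isCompact hΩ hμ continuous_id
  have hTint : Integrable (id ∘ T) μ :=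
    (integrable_of_continuous_of_ae_mem_isCompact hΩ hTμ continuous_id).comp_measurable hT.1
  exact (hid.sub hTint).norm

lemma IsKantorovichPotential.ae_sub_eq_norm_sub (hu0 : IsKantorovichPotential Ω μ ν u0)
    (hT : IsOptimalMap Ω μ ν T) (hΩ : IsCompact Ω) (hμ : ∀ᵐ x ∂μ, x ∈ Ω)
    (hv : LipschitzWith 1 v) (hu0v : EqOn u0 v Ω) :
    ∀ᵐ x ∂μ, v x - v (T x) = ‖x - T x‖ := by
  have hint := hT.integrable_norm_sub hΩ hμ
  obtain ⟨hTm, hTΩ, rfl, hcost⟩ := hT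
  have := Measure.isProbabilityMeasure_map (μ := μ) hTm.aemeasurable
  have hTμ : ∀ᵐ y ∂μ.map T, y ∈ Ω := ae_map_mem_of_mapsTo hΩ.measurableSet hμ hTm hTΩ
  have hvT := integrable_of_continuous_of_ae_mem_isCompact hΩ hTμ hv.continuous
  have hle := hcost.trans_le (hu0.W1_le hΩ hμ hTμ)
  rw [integral_congr_ae (hμ.mono hu0v), integral_congr_ae (hTμ.mono hu0v),
    integral_map hTm.aemeasurable hvT.aestronglyMeasurable] at hle
  simp only [← dist_eq_norm] at hint hle ⊢
  exact ae_sub_eq_dist_of_integral_dist_le hv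
    (integrable_of_continuous_of_ae_mem_isCompact hΩ hμ hv.continuous)
    (hvT.comp_measurable hTm) hint hle

lemma IsKantorovichPotential.ae_norm_sub_le (hu0 : IsKantorovichPotential Ω μ ν u0)
    (hT : IsOptimalMap Ω μ ν T) (hΩ : IsCompact Ω) (hμ : ∀ᵐ x ∂μ, x ∈ Ω) (hac : μ ≪ volume)
    {η : ℝ} (hf : ∀ᵐ x ∂volume.restrict Ω, ∃ g, HasGradientWithinAt u0 g Ω x ∧ f x = x - η • g) :
    ∀ᵐ x ∂μ, ‖f x - T x‖ ≤ |‖x - T x‖ - η| := by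
  obtain ⟨v, hv, hu0v⟩ := hu0.1.extend_real
  have hacΩ : μ ≪ volume.restrict Ω :=
    Measure.restrict_eq_self_of_ae_mem hμ ▸ hac.restrict Ω
  filter_upwards [hu0.ae_sub_eq_norm_sub hT hΩ hμ hv hu0v, hacΩ.ae_le hf,
    hacΩ.ae_le (ae_restrict_forall_hasGradientAt_of_eqOn volume hΩ.measurableSet hv hu0v)]
    with x hcontact ⟨g, hg, hfx⟩ hgrad
  exact hfx ▸ norm_sub_smul_gradient_sub_le hv (hgrad g hg) hcontact η

end Wasserstein

theorem stmt12_general {d : ℕ} {Ω : Set (EuclideanSpace ℝ (Fin d))} (hΩ : IsCompact Ω)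
    {μ ν : Measure (EuclideanSpace ℝ (Fin d))} [IsProbabilityMeasure μ] (hμ : μ Ωᶜ = 0)
    (hac : μ ≪ volume) {u0 : EuclideanSpace ℝ (Fin d) → ℝ}
    (hu0 : IsKantorovichPotential Ω μ ν u0)
    {T0 : EuclideanSpace ℝ (Fin d) → EuclideanSpace ℝ (Fin d)} (hT0 : IsOptimalMap Ω μ ν T0)
    (η : ℝ) {f : EuclideanSpace ℝ (Fin d) → EuclideanSpace ℝ (Fin d)} (hf : Measurable f)
    (hfae : ∀ᵐ x ∂(volume.restrict Ω), ∃ g : EuclideanSpace ℝ (Fin d),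
      HasGradientWithinAt u0 g Ω x ∧ f x = x - η • g) :
    W1 (μ.map f) ν ≤
      W1 μ ν - η * (2 * (μ {x | x ∈ Ω ∧ η ≤ ‖x - T0 x‖}).toReal - 1) := by
  have hμΩ : ∀ᵐ x ∂μ, x ∈ Ω := hμ
  have hint := hT0.integrable_norm_sub hΩ hμΩ
  have hfar : μ {x | x ∈ Ω ∧ η ≤ ‖x - T0 x‖} = μ {x | η ≤ ‖x - T0 x‖} :=
    measure_congr (hμΩ.mono fun x hx => propext (and_iff_right hx))
  calc W1 (μ.map f) ν = W1 (μ.map f) (μ.map T0) := by rw [hT0.2.2.1]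
    _ ≤ ∫ x, ‖f x - T0 x‖ ∂μ := W1_map_map_le hf hT0.1
    _ ≤ ∫ x, |‖x - T0 x‖ - η| ∂μ :=
      integral_mono_of_nonneg (ae_of_all μ fun _ => norm_nonneg _)
        (hint.sub (integrable_const η)).abs (hu0.ae_norm_sub_le hT0 hΩ hμΩ hac hfae)
    _ ≤ ∫ x, ‖x - T0 x‖ ∂μ - η * (2 * μ.real {x | η ≤ ‖x - T0 x‖} - 1) :=
      integral_abs_sub_le_integral_sub hint (fun _ => norm_nonneg _) η
    _ = W1 μ ν - η * (2 * (μ {x | x ∈ Ω ∧ η ≤ ‖x - T0 x‖}).toReal - 1) := by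
      rw [hT0.2.2.2, hfar, measureReal_def]

theorem stmt12 {d : ℕ} (hd : 1 ≤ d) (Ω : Set (EuclideanSpace ℝ (Fin d)))
    (hΩc : IsCompact Ω) (hΩv : Convex ℝ Ω)
    (μ ν : Measure (EuclideanSpace ℝ (Fin d)))
    [IsProbabilityMeasure μ] [IsProbabilityMeasure ν]
    (hμΩ : μ Ωᶜ = 0) (hνΩ : ν Ωᶜ = 0) (hac : μ ≪ volume)
    (u0 : EuclideanSpace ℝ (Fin d) → ℝ) (hu0 : IsKantorovichPotential Ω μ ν u0)
    (T0 : EuclideanSpace ℝ (Fin d) → EuclideanSpace ℝ (Fin d))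
    (hT0 : IsOptimalMap Ω μ ν T0)
    (η : ℝ) (hη : 0 ≤ η)
    (f : EuclideanSpace ℝ (Fin d) → EuclideanSpace ℝ (Fin d)) (hf : Measurable f)
    (hfae : ∀ᵐ x ∂(volume.restrict Ω), ∃ g : EuclideanSpace ℝ (Fin d),
      HasGradientWithinAt u0 g Ω x ∧ f x = x - η • g) :
    W1 (μ.map f) ν ≤
      W1 μ ν - η * (2 * (μ {x | x ∈ Ω ∧ η ≤ ‖x - T0 x‖}).toReal - 1) := by
  exact stmt12_general hΩc hμΩ hac hu0 hT0 η hf hfae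
end
end
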